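/- arXiv:1504.05275 — 5 statements merged into one kernel-verified Lean document; each statement's English description precedes it below -/
import Mathlib

section
/- Let π: (X,B,μ,T) → (Z,A,λ,R) be a factor map between invertible Lebesgue systems and P_μ(π) the relative Pinsker σ-algebra of (X,B,μ,T) with respect to π. Then for every ℓ ∈ ℕ and every finite measurable partition α of X, h_μ(T^ℓ, α | π⁻¹(A)) = h_μ(T^ℓ, α | P_μ(π)). -/
/-!
Write `C = π⁻¹(A)` and `P = P_μ(π)`. The argument only uses that `C` is strictly invariant,
`T⁻¹C = C`; this holds because `R`, a measurable bijection of a standard Borel space, is a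
measurable isomorphism.

A finite partition is encoded as a labelling `f : X → ι` with finitely many values, so that joins
become product labellings and refinement means that `g` determines `f`. Conditional Jensen for
`-x log x` shows that conditioning on more decreases entropy (`labH_anti`), and Bayes' formula
(`cp_sup_sig`) gives the chain rule `H(f, g | C) = H(g | C) + H(f | C ∨ σ(g))` (`labH_prod`). For
`C` invariant under `S` these yield `h(S, f | C) ≤ h(S, g | C) + H(f | C ∨ σ(g))` (`hLab_le_add`).

By this inequality, subadditivity of `h(T, · | C)` and an approximation in measure, the sets of
zero relative entropy form a σ-algebra (`relPinsker_measurableSet`). Hence every finite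
`P`-measurable labelling `ξ` has `h(T, ξ | C) = 0`, and so `h(S^n, ξ | C) = 0` for `S = T^ℓ`.

Let `f_n` be the `n`-step join of `f` under `S`. Applying the inequality to `S^n`, `f_n` and `ξ`
gives `h(S, f | C) ≤ (1/n) h(S^n, f_n | C) ≤ (1/n) H(f_n | C ∨ σ(ξ))`. Taking for `ξ` the
discretized conditional probabilities `μ(f_n = s | P)` brings the right-hand side arbitrarily close
to `(1/n) H(f_n | P)` (`exists_sig_le_labH_le`), and the infimum over `n` is `h(S, f | P)`. The
opposite inequality is monotonicity, as `C ≤ P`.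

Dynamical entropy is an infimum over `n`; all the comparisons are made directly between infima, so
its existence as a limit plays no role.
-/

open MeasureTheory Filter Set Topology

section EntropyCore

variable {X : Type*}

/-- Conditional entropy `H_μ(α | C)` of a finite family of sets given a sub-σ-algebra `C`. -/
noncomputable def condH {m0 : MeasurableSpace X} (μ : Measure X) {ι : Type*} [Fintype ι]
    (α : ι → Set X) (C : MeasurableSpace X) : ℝ :=
  ∑ i, ∫ x, Real.negMulLog ((μ[(α i).indicator (fun _ => (1:ℝ)) | C]) x) ∂μ

/-- Plain entropy `H_μ(α)` of a finite family of sets. -/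
noncomputable def plainH {m0 : MeasurableSpace X} (μ : Measure X) {ι : Type*} [Fintype ι]
    (α : ι → Set X) : ℝ :=
  ∑ i, Real.negMulLog (μ (α i)).toReal

/-- Atoms of the dynamical join `⋁_{i=0}^{n-1} T^{-i} α`. -/
def joinAtoms (T : X → X) {ι : Type*} (α : ι → Set X) (n : ℕ) : (Fin n → ι) → Set X :=
  fun s => ⋂ i : Fin n, (T^[(i : ℕ)]) ⁻¹' α (s i)

/-- Conditional dynamical entropy `h_μ(T, α | C)` of a finite family `α`
(as the infimum, which coincides with the defining limit, of `(1/n) H_μ(⋁_{i<n} T^{-i}α | C)`). -/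
noncomputable def hPartCond {m0 : MeasurableSpace X} (μ : Measure X) (T : X → X)
    {ι : Type*} [Fintype ι] (α : ι → Set X) (C : MeasurableSpace X) : ℝ :=
  ⨅ n : ℕ, (1 / (n + 1 : ℝ)) * condH μ (joinAtoms T α (n + 1)) C

/-- Dynamical entropy `h_μ(T, α)` of a finite family `α`. -/
noncomputable def hPart {m0 : MeasurableSpace X} (μ : Measure X) (T : X → X)
    {ι : Type*} [Fintype ι] (α : ι → Set X) : ℝ :=
  ⨅ n : ℕ, (1 / (n + 1 : ℝ)) * plainH μ (joinAtoms T α (n + 1))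

/-- A finite measurable partition of `X` (with respect to the σ-algebra `m`). -/
structure FinPart (X : Type*) (m : MeasurableSpace X) where
  k : ℕ
  atom : Fin k → Set X
  meas : ∀ i, MeasurableSet[m] (atom i)
  disj : ∀ i j, i ≠ j → Disjoint (atom i) (atom j)
  cover : ⋃ i, atom i = Set.univ

/-- Conditional (measure-theoretic) entropy `h_μ(T | C)`. -/
noncomputable def hCond {m0 : MeasurableSpace X} (μ : Measure X) (T : X → X)
    (C : MeasurableSpace X) : ℝ :=
  ⨆ α : FinPart X m0, hPartCond μ T α.atom C

end EntropyCore

section Pinsker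

variable {X : Type*}

/-- Two σ-algebras agree mod `μ` if every set of one differs from a set
of the other by a `μ`-null set. -/
def EqModMeasure {m0 : MeasurableSpace X} (μ : Measure X)
    (m₁ m₂ : MeasurableSpace X) : Prop :=
  (∀ s : Set X, MeasurableSet[m₁] s →
    ∃ t : Set X, MeasurableSet[m₂] t ∧ μ ((s \ t) ∪ (t \ s)) = 0) ∧
  (∀ s : Set X, MeasurableSet[m₂] s →
    ∃ t : Set X, MeasurableSet[m₁] t ∧ μ ((s \ t) ∪ (t \ s)) = 0)

/-- The relative Pinsker σ-algebra `P_μ(π)` of `(X,B,μ,T)` relative to a sub-σ-algebra `C`: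
the smallest sub-σ-algebra containing every finite partition `α` with `h_μ(T, α | C) = 0`. -/
noncomputable def relPinsker {m0 : MeasurableSpace X} (μ : Measure X) (T : X → X)
    (C : MeasurableSpace X) : MeasurableSpace X :=
  MeasurableSpace.generateFrom
    {s : Set X | ∃ α : FinPart X m0, hPartCond μ T α.atom C = 0 ∧ ∃ i, α.atom i = s}

end Pinsker

/-! ### Labellings and conditional entropy -/

section Labels

variable {X : Type*} {ι κ θ : Type*}

/-- Conditional entropy of the finite partition into the fibres of a labelling `f : X → ι`. -/
noncomputable def labH {m0 : MeasurableSpace X} (μ : Measure X) [Fintype ι] (f : X → ι)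
    (C : MeasurableSpace X) : ℝ :=
  condH μ (fun i => f ⁻¹' {i}) C

/-- The σ-algebra generated by a labelling, the label set being discrete. -/
abbrev sig (f : X → ι) : MeasurableSpace X := MeasurableSpace.comap f ⊤

/-- Conditional probability `μ(f = i | C)`. -/
noncomputable def cp {m0 : MeasurableSpace X} (μ : Measure X) (C : MeasurableSpace X)
    (f : X → ι) (i : ι) : X → ℝ :=
  μ[(f ⁻¹' {i}).indicator (fun _ => (1 : ℝ)) | C]

lemma labH_eq {m0 : MeasurableSpace X} (μ : Measure X) [Fintype ι] (f : X → ι)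
    (C : MeasurableSpace X) :
    labH μ f C = ∑ i, ∫ x, Real.negMulLog (cp μ C f i x) ∂μ := rfl

lemma measurableSet_preimage_of_sig_le {m : MeasurableSpace X} {f : X → ι} (h : sig f ≤ m)
    (s : Set ι) : MeasurableSet[m] (f ⁻¹' s) :=
  h _ ⟨s, trivial, rfl⟩

lemma sig_le_iff [Finite ι] {m : MeasurableSpace X} {f : X → ι} :
    sig f ≤ m ↔ ∀ i, MeasurableSet[m] (f ⁻¹' {i}) := by
  refine ⟨fun h i => measurableSet_preimage_of_sig_le h _, fun h => ?_⟩
  rintro _ ⟨s, -, rfl⟩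
  rw [← biUnion_of_singleton s, preimage_iUnion₂]
  exact MeasurableSet.biUnion s.to_countable fun i _ => h i

lemma sig_comp_le (φ : ι → κ) (f : X → ι) : sig (φ ∘ f) ≤ sig f := by
  rw [sig, ← MeasurableSpace.comap_comp]
  exact MeasurableSpace.comap_mono le_top

lemma sig_le_of_det {f : X → ι} {g : X → κ} (h : ∀ x y, g x = g y → f x = f y) :
    sig f ≤ sig g := by
  rintro _ ⟨s, -, rfl⟩
  refine ⟨g '' (f ⁻¹' s), trivial, ?_⟩
  ext x
  constructor
  · rintro ⟨y, hy, hyx⟩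
    simpa [h y x hyx] using hy
  · exact fun hx => ⟨x, hx, rfl⟩

lemma sig_prod_le {m : MeasurableSpace X} {f : X → ι} {g : X → κ} [Finite ι] [Finite κ]
    (hf : sig f ≤ m) (hg : sig g ≤ m) : sig (fun x => (f x, g x)) ≤ m := by
  rw [sig_le_iff]
  rintro ⟨i, j⟩
  have : (fun x => (f x, g x)) ⁻¹' {(i, j)} = f ⁻¹' {i} ∩ g ⁻¹' {j} := by
    ext x; simp
  rw [this]
  exact (measurableSet_preimage_of_sig_le hf _).inter (measurableSet_preimage_of_sig_le hg _)

lemma sig_pi_le {m : MeasurableSpace X} [Finite ι] [Finite κ] {F : κ → X → ι}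
    (hF : ∀ k, sig (F k) ≤ m) : sig (fun x k => F k x) ≤ m := by
  rw [sig_le_iff]
  intro s
  have : (fun x k => F k x) ⁻¹' {s} = ⋂ k, F k ⁻¹' {s k} := by
    ext x; simp [funext_iff]
  rw [this]
  exact MeasurableSet.iInter fun k => measurableSet_preimage_of_sig_le (hF k) _

lemma aesm_cp {C m0 : MeasurableSpace X} {μ : Measure X}
    (f : X → ι) (i : ι) : AEStronglyMeasurable (cp μ C f i) μ :=
  integrable_condExp.aestronglyMeasurable

lemma integrable_cp {C m0 : MeasurableSpace X} {μ : Measure X}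
    (f : X → ι) (i : ι) : Integrable (cp μ C f i) μ := integrable_condExp

lemma labH_swap {C m0 : MeasurableSpace X} {μ : Measure X}
    [Fintype ι] [Fintype κ] (f : X → ι) (g : X → κ) :
    labH μ (fun x => (f x, g x)) C = labH μ (fun x => (g x, f x)) C := by
  rw [labH_eq, labH_eq]
  refine Fintype.sum_equiv (Equiv.prodComm ι κ) _ _ ?_
  rintro ⟨i, j⟩
  have : (fun x => (f x, g x)) ⁻¹' {(i, j)} = (fun x => (g x, f x)) ⁻¹' {(j, i)} := by
    ext x; simp [and_comm]
  simp [cp, this]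

section Basic

variable {C D m0 : MeasurableSpace X} {μ : Measure X} [IsProbabilityMeasure μ]

lemma integrable_ind {f : X → ι} (hf : sig f ≤ m0) (i : ι) :
    Integrable ((f ⁻¹' {i}).indicator (fun _ => (1 : ℝ))) μ :=
  (integrable_const 1).indicator (measurableSet_preimage_of_sig_le hf _)

lemma cp_mem (hC : C ≤ m0) {f : X → ι} (hf : sig f ≤ m0) (i : ι) :
    ∀ᵐ x ∂μ, cp μ C f i x ∈ Icc (0 : ℝ) 1 :=
  Convex.condExp_mem hC (integrable_ind hf i) isClosed_Icc (convex_Icc 0 1)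
    (Eventually.of_forall fun x => by by_cases h : x ∈ f ⁻¹' {i} <;> simp [h])

lemma integrable_negMulLog {u : X → ℝ} (hu : AEStronglyMeasurable u μ)
    (h : ∀ᵐ x ∂μ, u x ∈ Icc (0 : ℝ) 1) : Integrable (fun x => Real.negMulLog (u x)) μ := by
  refine Integrable.of_bound (C := 1)
    (Real.continuous_negMulLog.comp_aestronglyMeasurable hu) ?_
  filter_upwards [h] with x hx
  rw [Real.norm_of_nonneg (Real.negMulLog_nonneg hx.1 hx.2)]
  linarith [Real.negMulLog_le_one_sub_self hx.1, hx.1]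

lemma integrable_negMulLog_cp (hC : C ≤ m0) {f : X → ι} (hf : sig f ≤ m0) (i : ι) :
    Integrable (fun x => Real.negMulLog (cp μ C f i x)) μ :=
  integrable_negMulLog (aesm_cp f i) (cp_mem hC hf i)

lemma labH_nonneg [Fintype ι] (hC : C ≤ m0) {f : X → ι} (hf : sig f ≤ m0) :
    0 ≤ labH μ f C := by
  rw [labH_eq]
  refine Finset.sum_nonneg fun i _ => integral_nonneg_of_ae ?_
  filter_upwards [cp_mem hC hf i] with x hx using Real.negMulLog_nonneg hx.1 hx.2

lemma labH_eq_zero [Fintype ι] (hC : C ≤ m0) {f : X → ι} (hf : sig f ≤ C) :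
    labH μ f C = 0 := by
  rw [labH_eq]
  refine Finset.sum_eq_zero fun i _ => ?_
  have h1 : cp μ C f i = (f ⁻¹' {i}).indicator (fun _ => (1 : ℝ)) :=
    condExp_of_stronglyMeasurable hC
      (stronglyMeasurable_const.indicator (measurableSet_preimage_of_sig_le hf _))
      (integrable_ind (hf.trans hC) i)
  have h2 : ∀ x, Real.negMulLog (cp μ C f i x) = 0 := by
    intro x
    rw [h1]
    by_cases h : x ∈ f ⁻¹' {i} <;> simp [h]
  simp [h2]

/-- Conditioning on more decreases entropy: conditional Jensen for `-x log x`. -/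
lemma labH_anti [Fintype ι] (hCD : C ≤ D) (hD : D ≤ m0) {f : X → ι} (hf : sig f ≤ m0) :
    labH μ f D ≤ labH μ f C := by
  rw [labH_eq, labH_eq]
  refine Finset.sum_le_sum fun i _ => ?_
  have hC := hCD.trans hD
  have hJ : μ[Real.negMulLog ∘ cp μ D f i | C] ≤ᵐ[μ] Real.negMulLog ∘ μ[cp μ D f i | C] :=
    ConcaveOn.condExp_map_le (s := Icc (0 : ℝ) 1) hC
      (Real.concaveOn_negMulLog.subset Icc_subset_Ici_self (convex_Icc 0 1))
      (Real.continuous_negMulLog.upperSemicontinuous.upperSemicontinuousOn _)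
      (cp_mem hD hf i) isClosed_Icc (integrable_cp f i) (integrable_negMulLog_cp hD hf i)
  have htower : μ[cp μ D f i | C] =ᵐ[μ] cp μ C f i := condExp_condExp_of_le hCD hD
  calc ∫ x, Real.negMulLog (cp μ D f i x) ∂μ
      = ∫ x, (μ[Real.negMulLog ∘ cp μ D f i | C]) x ∂μ := (integral_condExp hC).symm
    _ ≤ ∫ x, Real.negMulLog (cp μ C f i x) ∂μ := by
        refine integral_mono_ae integrable_condExp (integrable_negMulLog_cp hC hf i) ?_
        filter_upwards [hJ, htower] with x h1 h2
        simpa [h2] using h1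

/-- Conditional entropy is invariant under a measure-preserving map: conditional probabilities
given the pulled-back σ-algebra are the pulled-back conditional probabilities. -/
lemma labH_comp [Fintype ι] {S : X → X} (hS : MeasurePreserving S μ μ) (hD : D ≤ m0)
    {f : X → ι} (hf : sig f ≤ m0) :
    labH μ (f ∘ S) (MeasurableSpace.comap S D) = labH μ f D := by
  have hSD : MeasurableSpace.comap S D ≤ m0 := by
    rintro _ ⟨s, hs, rfl⟩
    exact hS.measurable (hD _ hs)
  rw [labH_eq, labH_eq]
  refine Finset.sum_congr rfl fun i _ => ?_
  have key : cp μ D f i ∘ S =ᵐ[μ] cp μ (MeasurableSpace.comap S D) (f ∘ S) i := by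
    have hint : Integrable (cp μ D f i ∘ S) μ := hS.integrable_comp_of_integrable (integrable_cp f i)
    refine ae_eq_condExp_of_forall_setIntegral_eq hSD ?_ (fun _ _ _ => hint.integrableOn) ?_ ?_
    · have := hS.integrable_comp_of_integrable (integrable_ind (μ := μ) hf i)
      exact this
    · rintro _ ⟨s, hs, rfl⟩ -
      have e1 : ∫ x in S ⁻¹' s, (cp μ D f i ∘ S) x ∂μ = ∫ x in s, cp μ D f i x ∂μ := by
        have h := setIntegral_map (μ := μ) (g := S) (f := cp μ D f i) (hD _ hs)
          (by rw [hS.map_eq]; exact aesm_cp f i) hS.measurable.aemeasurable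
        rw [hS.map_eq] at h
        exact h.symm
      have e2 : ∫ x in S ⁻¹' s, ((f ∘ S) ⁻¹' {i}).indicator (fun _ => (1 : ℝ)) x ∂μ
          = ∫ x in s, (f ⁻¹' {i}).indicator (fun _ => (1 : ℝ)) x ∂μ := by
        have h := setIntegral_map (μ := μ) (g := S)
          (f := (f ⁻¹' {i}).indicator (fun _ => (1 : ℝ))) (hD _ hs)
          (by rw [hS.map_eq]; exact (integrable_ind hf i).aestronglyMeasurable)
          hS.measurable.aemeasurable
        rw [hS.map_eq] at h
        exact h.symm
      rw [e1, e2]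
      exact setIntegral_condExp hD (integrable_ind hf i) hs
    · have : StronglyMeasurable[MeasurableSpace.comap S D] (cp μ D f i ∘ S) :=
        StronglyMeasurable.comp_measurable (stronglyMeasurable_condExp (m := D))
          (comap_measurable S)
      exact this.aestronglyMeasurable
  have h := integral_map (μ := μ) (φ := S) hS.measurable.aemeasurable
    (f := fun x => Real.negMulLog (cp μ D f i x))
    (by rw [hS.map_eq]; exact Real.continuous_negMulLog.comp_aestronglyMeasurable (aesm_cp f i))
  rw [hS.map_eq] at h
  rw [h]
  refine integral_congr_ae ?_
  filter_upwards [key] with x hx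
  rw [← hx]; rfl

/-! ### The chain rule -/

/-- Sets of `C ⊔ σ(g)` coincide with some set of `C` on each fibre of `g`. -/
lemma exists_of_measurableSet_sup_sig {g : X → κ} {s : Set X}
    (hs : MeasurableSet[C ⊔ sig g] s) (j : κ) :
    ∃ c, MeasurableSet[C] c ∧ s ∩ g ⁻¹' {j} = c ∩ g ⁻¹' {j} := by
  let M : MeasurableSpace X :=
    { MeasurableSet' := fun s => ∃ c, MeasurableSet[C] c ∧ s ∩ g ⁻¹' {j} = c ∩ g ⁻¹' {j}
      measurableSet_empty := ⟨∅, @MeasurableSet.empty _ C, rfl⟩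
      measurableSet_compl := by
        rintro s ⟨c, hc, h⟩
        refine ⟨cᶜ, hc.compl, ?_⟩
        ext x
        have := congrArg (x ∈ ·) h
        simp only [mem_inter_iff, eq_iff_iff, mem_compl_iff] at this ⊢
        tauto
      measurableSet_iUnion := by
        intro s hs
        choose c hc h using hs
        refine ⟨⋃ n, c n, MeasurableSet.iUnion hc, ?_⟩
        rw [iUnion_inter, iUnion_inter]
        exact iUnion_congr h }
  have hM : C ⊔ sig g ≤ M := by
    refine sup_le (fun s hs => ⟨s, hs, rfl⟩) ?_
    rintro _ ⟨t, -, rfl⟩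
    by_cases hj : j ∈ t
    · refine ⟨univ, @MeasurableSet.univ _ C, ?_⟩
      ext x
      simp only [mem_inter_iff, mem_preimage, mem_singleton_iff, mem_univ, true_and,
        and_iff_right_iff_imp]
      rintro rfl; exact hj
    · refine ⟨∅, @MeasurableSet.empty _ C, ?_⟩
      ext x
      simp only [mem_inter_iff, mem_preimage, mem_singleton_iff, mem_empty_iff_false, false_and,
        iff_false, not_and]
      rintro h rfl; exact hj h
  exact hM s hs

lemma cp_pair_le {f : X → ι} {g : X → κ} [Finite ι] [Finite κ]
    (hf : sig f ≤ m0) (hg : sig g ≤ m0) (i : ι) (j : κ) :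
    ∀ᵐ x ∂μ, cp μ C (fun x => (f x, g x)) (i, j) x ≤ cp μ C g j x := by
  refine condExp_mono (integrable_ind (sig_prod_le hf hg) _) (integrable_ind hg _)
    (Eventually.of_forall fun x => ?_)
  refine indicator_le_indicator_of_subset ?_ (fun _ => zero_le_one) x
  intro y hy
  simp only [mem_preimage, mem_singleton_iff, Prod.mk.injEq] at hy ⊢
  exact hy.2

lemma sum_cp_pair [Fintype ι] [Finite κ] {f : X → ι} {g : X → κ}
    (hf : sig f ≤ m0) (hg : sig g ≤ m0) (j : κ) :
    ∀ᵐ x ∂μ, ∑ i, cp μ C (fun x => (f x, g x)) (i, j) x = cp μ C g j x := by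
  classical
  have h1 := condExp_finsetSum (μ := μ) (s := (Finset.univ : Finset ι))
    (f := fun i => ((fun x => (f x, g x)) ⁻¹' {(i, j)}).indicator (fun _ => (1 : ℝ)))
    (fun i _ => integrable_ind (sig_prod_le hf hg) _) C
  have h2 : (∑ i, ((fun x => (f x, g x)) ⁻¹' {(i, j)}).indicator (fun _ => (1 : ℝ)))
      = (g ⁻¹' {j}).indicator (fun _ => (1 : ℝ)) := by
    ext x
    simp only [Finset.sum_apply, indicator_apply, mem_preimage, mem_singleton_iff, Prod.mk.injEq]
    by_cases h : g x = j <;> simp [h]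
  rw [h2] at h1
  filter_upwards [h1] with x hx
  simp only [Finset.sum_apply] at hx
  exact hx.symm

/-- Bayes' formula: `μ(f = i | C ∨ σ(g)) = μ(f = i, g = j | C) / μ(g = j | C)` on `{g = j}`. -/
lemma cp_sup_sig (hC : C ≤ m0) [Fintype ι] [Fintype κ] {f : X → ι} {g : X → κ}
    (hf : sig f ≤ m0) (hg : sig g ≤ m0) (i : ι) :
    cp μ (C ⊔ sig g) f i =ᵐ[μ] fun x => ∑ j, (g ⁻¹' {j}).indicator
      (fun x => cp μ C (fun x => (f x, g x)) (i, j) x / cp μ C g j x) x := by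
  classical
  have hfg := sig_prod_le hf hg
  set q : κ → X → ℝ := fun j x => cp μ C (fun x => (f x, g x)) (i, j) x / cp μ C g j x with hq
  have hqsm : ∀ j, StronglyMeasurable[C] (q j) := fun j =>
    (stronglyMeasurable_condExp.measurable.div stronglyMeasurable_condExp.measurable).stronglyMeasurable
  have hqb : ∀ j, ∀ᵐ x ∂μ, ‖q j x‖ ≤ 1 := by
    intro j
    filter_upwards [cp_pair_le (μ := μ) (C := C) hf hg i j, cp_mem (μ := μ) hC hfg (i, j),
      cp_mem (μ := μ) hC hg j] with x h1 h2 h3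
    rw [Real.norm_of_nonneg (div_nonneg h2.1 h3.1)]
    exact div_le_one_of_le₀ h1 h3.1
  have hqint : ∀ j, Integrable (q j) μ := fun j =>
    Integrable.of_bound ((hqsm j).mono hC).aestronglyMeasurable 1 (hqb j)
  have hqi : ∀ j, Integrable ((g ⁻¹' {j}).indicator (q j)) μ := fun j =>
    (hqint j).indicator (measurableSet_preimage_of_sig_le hg _)
  have hsum : (fun x => ∑ j, (g ⁻¹' {j}).indicator (q j) x)
      = ∑ j, (g ⁻¹' {j}).indicator (q j) := by
    ext x; simp
  -- on a `C`-measurable set, both candidates integrate to `∫ μ(f = i, g = j | C)`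
  have hloc : ∀ j c, MeasurableSet[C] c →
      ∫ x in c, (g ⁻¹' {j}).indicator (q j) x ∂μ
        = ∫ x in c, ((fun x => (f x, g x)) ⁻¹' {(i, j)}).indicator (fun _ => (1 : ℝ)) x ∂μ := by
    intro j c hc
    have hmul : (g ⁻¹' {j}).indicator (q j)
        = q j * (g ⁻¹' {j}).indicator (fun _ => (1 : ℝ)) := by
      ext x
      by_cases h : x ∈ g ⁻¹' {j}
      · simp only [Pi.mul_apply, indicator_of_mem h, mul_one]
      · simp only [Pi.mul_apply, indicator_of_notMem h, mul_zero]
    have hpull : μ[(g ⁻¹' {j}).indicator (q j) | C] =ᵐ[μ] q j * cp μ C g j := by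
      rw [hmul]
      exact condExp_mul_of_stronglyMeasurable_left (hqsm j) (hmul ▸ hqi j) (integrable_ind hg j)
    rw [← setIntegral_condExp hC (hqi j) hc,
      ← setIntegral_condExp hC (integrable_ind hfg (i, j)) hc]
    refine integral_congr_ae (ae_restrict_of_ae ?_)
    filter_upwards [hpull, cp_pair_le (μ := μ) (C := C) hf hg i j, cp_mem (μ := μ) hC hfg (i, j),
      cp_mem (μ := μ) hC hg j] with x h1 h2 h3 h4
    rw [h1]
    change q j x * cp μ C g j x = cp μ C (fun x => (f x, g x)) (i, j) x
    rcases eq_or_ne (cp μ C g j x) 0 with h0 | h0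
    · rw [h0, mul_zero]; rw [h0] at h2; exact le_antisymm h3.1 h2
    · exact div_mul_cancel₀ _ h0
  symm
  change (fun x => ∑ j, (g ⁻¹' {j}).indicator (q j) x) =ᵐ[μ] _
  refine ae_eq_condExp_of_forall_setIntegral_eq (sup_le hC hg) (integrable_ind hf i)
    (fun _ _ _ => ?_) ?_ ?_
  · exact (integrable_finsetSum _ fun j _ => hqi j).integrableOn
  · intro s hs _
    have hsm : MeasurableSet[m0] s := (sup_le hC hg) _ hs
    rw [integral_finsetSum _ fun j _ => (hqi j).integrableOn]
    have hdec : (f ⁻¹' {i}).indicator (fun _ => (1 : ℝ)) = fun x => ∑ j,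
        ((fun x => (f x, g x)) ⁻¹' {(i, j)}).indicator (fun _ => (1 : ℝ)) x := by
      ext x
      simp only [indicator_apply, mem_preimage, mem_singleton_iff, Prod.mk.injEq]
      by_cases h : f x = i <;> simp [h]
    rw [hdec, integral_finsetSum _ fun j _ => (integrable_ind hfg (i, j)).integrableOn]
    refine Finset.sum_congr rfl fun j _ => ?_
    obtain ⟨c, hc, hcs⟩ := exists_of_measurableSet_sup_sig hs j
    have hsw : ∀ u : X → ℝ, (∀ x, g x ≠ j → u x = 0) →
        ∫ x in s, u x ∂μ = ∫ x in c, u x ∂μ := by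
      intro u hu
      rw [← integral_indicator hsm, ← integral_indicator (hC _ hc)]
      congr 1
      ext x
      by_cases h : g x = j
      · have := congrArg (x ∈ ·) hcs
        simp only [mem_inter_iff, mem_preimage, mem_singleton_iff, h, and_true,
          eq_iff_iff] at this
        simp only [indicator_apply, this]
      · simp [indicator_apply, hu x h]
    rw [hsw _ fun x hx => by simp [hx], hsw _ fun x hx => by simp [hx]]
    exact hloc j c hc
  · rw [hsum]
    refine (Finset.stronglyMeasurable_sum (m := C ⊔ sig g) _ fun j _ => ?_).aestronglyMeasurable
    exact ((hqsm j).mono le_sup_left).indicator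
      (measurableSet_preimage_of_sig_le (m := C ⊔ sig g) le_sup_right _)

/-- The chain rule `H(f, g | C) = H(g | C) + H(f | C ∨ σ(g))`. -/
lemma labH_prod (hC : C ≤ m0) [Fintype ι] [Fintype κ] {f : X → ι} {g : X → κ}
    (hf : sig f ≤ m0) (hg : sig g ≤ m0) :
    labH μ (fun x => (f x, g x)) C = labH μ g C + labH μ f (C ⊔ sig g) := by
  classical
  have hfg := sig_prod_le hf hg
  set p : ι → κ → X → ℝ := fun i j => cp μ C (fun x => (f x, g x)) (i, j) with hp
  -- with `p_ij = μ(f = i, g = j | C)` and `p_j = μ(g = j | C)`, Bayes' formula turns the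
  -- integral over `{g = j}` into the integral of `p_j • negMulLog (p_ij / p_j)`
  have hterm : ∀ i, ∫ x, Real.negMulLog (cp μ (C ⊔ sig g) f i x) ∂μ
      = ∑ j, ∫ x, (Real.negMulLog (p i j x) + p i j x * Real.log (cp μ C g j x)) ∂μ := by
    intro i
    have h1 : (fun x => Real.negMulLog (cp μ (C ⊔ sig g) f i x)) =ᵐ[μ] fun x =>
        ∑ j, (g ⁻¹' {j}).indicator (fun x => Real.negMulLog (p i j x / cp μ C g j x)) x := by
      filter_upwards [cp_sup_sig (μ := μ) hC hf hg i] with x hx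
      rw [hx, Finset.sum_eq_single (g x), Finset.sum_eq_single (g x)]
      · simp [hp]
      · intro j _ hj; exact indicator_of_notMem (by simpa using hj.symm) _
      · simp
      · intro j _ hj; exact indicator_of_notMem (by simpa using hj.symm) _
      · simp
    have hqm : ∀ j, StronglyMeasurable[C] fun x =>
        Real.negMulLog (p i j x / cp μ C g j x) := fun j =>
      (Real.continuous_negMulLog.measurable.comp
        (stronglyMeasurable_condExp.measurable.div
          stronglyMeasurable_condExp.measurable)).stronglyMeasurable
    have hqint : ∀ j, Integrable (fun x => Real.negMulLog (p i j x / cp μ C g j x)) μ := by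
      intro j
      refine integrable_negMulLog ((integrable_cp _ _).aestronglyMeasurable.aemeasurable.div
        (integrable_cp _ _).aestronglyMeasurable.aemeasurable).aestronglyMeasurable ?_
      filter_upwards [cp_pair_le (μ := μ) (C := C) hf hg i j, cp_mem (μ := μ) hC hfg (i, j),
        cp_mem (μ := μ) hC hg j] with x h1 h2 h3
      exact ⟨div_nonneg h2.1 h3.1, div_le_one_of_le₀ h1 h3.1⟩
    have hqi : ∀ j, Integrable ((g ⁻¹' {j}).indicator
        fun x => Real.negMulLog (p i j x / cp μ C g j x)) μ := fun j =>
      (hqint j).indicator (measurableSet_preimage_of_sig_le hg _)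
    rw [integral_congr_ae h1, integral_finsetSum _ fun j _ => hqi j]
    refine Finset.sum_congr rfl fun j _ => ?_
    rw [← integral_condExp hC]
    have hmul : ((g ⁻¹' {j}).indicator fun x => Real.negMulLog (p i j x / cp μ C g j x))
        = (fun x => Real.negMulLog (p i j x / cp μ C g j x))
          * (g ⁻¹' {j}).indicator (fun _ => (1 : ℝ)) := by
      ext x
      by_cases h : x ∈ g ⁻¹' {j}
      · simp only [Pi.mul_apply, indicator_of_mem h, mul_one]
      · simp only [Pi.mul_apply, indicator_of_notMem h, mul_zero]
    have hpull : μ[(g ⁻¹' {j}).indicator fun x => Real.negMulLog (p i j x / cp μ C g j x) | C]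
        =ᵐ[μ] (fun x => Real.negMulLog (p i j x / cp μ C g j x)) * cp μ C g j := by
      rw [hmul]
      exact condExp_mul_of_stronglyMeasurable_left (hqm j) (hmul ▸ hqi j) (integrable_ind hg j)
    refine integral_congr_ae ?_
    filter_upwards [hpull, cp_pair_le (μ := μ) (C := C) hf hg i j, cp_mem (μ := μ) hC hfg (i, j)]
      with x h1 h2 h3
    rw [h1]
    simp only [Pi.mul_apply]
    rcases eq_or_ne (cp μ C g j x) 0 with h0 | h0
    · rw [h0] at h2 ⊢
      have : p i j x = 0 := le_antisymm h2 h3.1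
      simp [this]
    · rcases eq_or_ne (p i j x) 0 with h0' | h0'
      · simp [h0']
      · rw [Real.negMulLog, Real.negMulLog, Real.log_div h0' h0]
        field_simp
        ring
  have hlogint : ∀ i j, Integrable (fun x => p i j x * Real.log (cp μ C g j x)) μ := by
    intro i j
    have hb : Integrable (fun x => Real.negMulLog (cp μ C g j x)) μ :=
      integrable_negMulLog_cp hC hg j
    refine hb.mono' ((integrable_cp _ _).aestronglyMeasurable.mul
      (Real.measurable_log.comp_aemeasurable
        (integrable_cp _ _).aestronglyMeasurable.aemeasurable).aestronglyMeasurable) ?_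
    filter_upwards [cp_pair_le (μ := μ) (C := C) hf hg i j, cp_mem (μ := μ) hC hfg (i, j),
      cp_mem (μ := μ) hC hg j] with x h1 h2 h3
    have hl := Real.log_nonpos h3.1 h3.2
    rw [norm_mul, Real.norm_of_nonneg h2.1, Real.norm_of_nonpos hl, Real.negMulLog]
    nlinarith
  have hcol : ∀ j, ∑ i, ∫ x, p i j x * Real.log (cp μ C g j x) ∂μ
      = - ∫ x, Real.negMulLog (cp μ C g j x) ∂μ := by
    intro j
    rw [← integral_finsetSum _ fun i _ => hlogint i j, ← integral_neg]
    refine integral_congr_ae ?_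
    filter_upwards [sum_cp_pair (μ := μ) (C := C) hf hg j] with x hx
    rw [← Finset.sum_mul]
    change (∑ i, cp μ C (fun x => (f x, g x)) (i, j) x) * _ = _
    rw [hx, Real.negMulLog]
    ring
  have hA : labH μ f (C ⊔ sig g) = labH μ (fun x => (f x, g x)) C - labH μ g C := by
    rw [labH_eq, labH_eq, labH_eq, Fintype.sum_prod_type, Finset.sum_congr rfl fun i _ => hterm i]
    have : ∀ i j, ∫ x, (Real.negMulLog (p i j x) + p i j x * Real.log (cp μ C g j x)) ∂μ
        = ∫ x, Real.negMulLog (p i j x) ∂μ + ∫ x, p i j x * Real.log (cp μ C g j x) ∂μ :=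
      fun i j => integral_add (integrable_negMulLog_cp hC hfg (i, j)) (hlogint i j)
    simp only [this, Finset.sum_add_distrib]
    rw [Finset.sum_comm (f := fun i j => ∫ x, p i j x * Real.log (cp μ C g j x) ∂μ),
      Finset.sum_congr rfl fun j _ => hcol j, Finset.sum_neg_distrib, ← sub_eq_add_neg]
  rw [hA]; ring

/-- A labelling determined by another one has no more entropy. -/
lemma labH_le_of_det (hC : C ≤ m0) [Fintype ι] [Fintype κ] {f : X → ι} {g : X → κ}
    (hg : sig g ≤ m0) (h : ∀ x y, g x = g y → f x = f y) : labH μ f C ≤ labH μ g C := by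
  have hfg := sig_le_of_det h
  have hf := hfg.trans hg
  have h1 := labH_prod (μ := μ) hC hf hg
  have h2 := labH_prod (μ := μ) hC hg hf
  rw [labH_eq_zero (sup_le hC hg) (hfg.trans le_sup_right), labH_swap] at h1
  have h3 := labH_nonneg (μ := μ) (sup_le hC hf) hg
  linarith

lemma labH_prod_le (hC : C ≤ m0) [Fintype ι] [Fintype κ] {f : X → ι} {g : X → κ}
    (hf : sig f ≤ m0) (hg : sig g ≤ m0) :
    labH μ (fun x => (f x, g x)) C ≤ labH μ f C + labH μ g C := by
  rw [labH_prod hC hf hg]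
  linarith [labH_anti (μ := μ) le_sup_left (sup_le hC hg) hf (C := C) (D := C ⊔ sig g)]

lemma labH_pi_le (hC : C ≤ m0) [Fintype ι] (n : ℕ) (F : Fin n → X → ι)
    (hF : ∀ k, sig (F k) ≤ m0) :
    labH μ (fun x k => F k x) C ≤ ∑ k, labH μ (F k) C := by
  induction n with
  | zero =>
    refine (labH_eq_zero hC ?_).le.trans (by simp)
    exact sig_pi_le fun k => k.elim0
  | succ n ih =>
    have hF' : sig (fun x (k : Fin n) => F k.succ x) ≤ m0 := sig_pi_le fun k => hF _
    rw [Fin.sum_univ_succ]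
    calc labH μ (fun x k => F k x) C
        ≤ labH μ (fun x => (F 0 x, fun k : Fin n => F k.succ x)) C := by
          refine labH_le_of_det hC (sig_prod_le (hF 0) hF') fun x y h => ?_
          simp only [Prod.mk.injEq] at h
          ext k
          refine Fin.cases h.1 (fun k => congrFun h.2 k) k
      _ ≤ _ := (labH_prod_le hC (hF 0) hF').trans (by gcongr; exact ih _ fun k => hF _)

end Basic

/-! ### Dynamical entropy of labellings -/

/-- The labelling by the first `n` steps of the `S`-itinerary, whose fibres are the atoms of the
dynamical join `⋁_{i<n} S^{-i} f`. -/
def joinLab (S : X → X) (f : X → ι) (n : ℕ) : X → (Fin n → ι) := fun x i => f (S^[(i : ℕ)] x)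

/-- Conditional dynamical entropy of a labelling. -/
noncomputable def hLab {m0 : MeasurableSpace X} (μ : Measure X) [Fintype ι] (S : X → X)
    (f : X → ι) (C : MeasurableSpace X) : ℝ :=
  ⨅ n : ℕ, (1 / (n + 1 : ℝ)) * labH μ (joinLab S f (n + 1)) C

lemma hPartCond_eq_hLab {m0 : MeasurableSpace X} (μ : Measure X) [Fintype ι] (S : X → X)
    (f : X → ι) (C : MeasurableSpace X) :
    hPartCond μ S (fun i => f ⁻¹' {i}) C = hLab μ S f C := by
  have : ∀ n, joinAtoms S (fun i => f ⁻¹' {i}) n = fun s => joinLab S f n ⁻¹' {s} := by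
    intro n
    ext s x
    simp [joinAtoms, joinLab, funext_iff]
  simp only [hPartCond, hLab, this, labH]

lemma FinPart.exists_lab {m0 : MeasurableSpace X} (α : FinPart X m0) :
    ∃ f : X → Fin α.k, sig f ≤ m0 ∧ α.atom = fun i => f ⁻¹' {i} := by
  have h : ∀ x, ∃ i, x ∈ α.atom i := fun x => by
    have : x ∈ ⋃ i, α.atom i := by rw [α.cover]; trivial
    simpa using this
  choose f hf using h
  have hfa : α.atom = fun i => f ⁻¹' {i} := by
    ext i x
    constructor
    · intro hx
      by_contra hne
      exact (α.disj (f x) i hne).le_bot ⟨hf x, hx⟩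
    · rintro rfl
      exact hf x
  refine ⟨f, sig_le_iff.2 fun i => ?_, hfa⟩
  have := α.meas i
  rwa [hfa] at this

lemma comap_iterate_eq {S : X → X} {C : MeasurableSpace X} (h : MeasurableSpace.comap S C = C)
    (n : ℕ) : MeasurableSpace.comap S^[n] C = C := by
  induction n with
  | zero => simp [MeasurableSpace.comap_id]
  | succ n ih => rw [Function.iterate_succ, ← MeasurableSpace.comap_comp, ih, h]

lemma le_hLab {C m0 : MeasurableSpace X} {μ : Measure X}
    [Fintype ι] {f : X → ι} {c : ℝ}
    (h : ∀ n : ℕ, 0 < n → c ≤ (1 / (n : ℝ)) * labH μ (joinLab S f n) C) : c ≤ hLab μ S f C := by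
  refine le_ciInf fun n => ?_
  simpa using h (n + 1) n.succ_pos

section Dynamics

variable {C m0 : MeasurableSpace X} {μ : Measure X} [IsProbabilityMeasure μ] {S : X → X}

lemma sig_comp_le_of_measurable (hS : Measurable S) {f : X → ι} (hf : sig f ≤ m0) :
    sig (f ∘ S) ≤ m0 := by
  rintro _ ⟨s, -, rfl⟩
  exact hS (measurableSet_preimage_of_sig_le hf s)

lemma sig_joinLab_le [Finite ι] (hS : Measurable S) {f : X → ι} (hf : sig f ≤ m0) (n : ℕ) :
    sig (joinLab S f n) ≤ m0 :=
  sig_pi_le fun i => sig_comp_le_of_measurable (hS.iterate i) hf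

lemma labH_comp_iterate_sup [Fintype ι] (hC : C ≤ m0) (hS : MeasurePreserving S μ μ)
    (hSC : MeasurableSpace.comap S C = C) {f : X → ι} {g : X → κ} (hf : sig f ≤ m0)
    (hg : sig g ≤ m0) (i : ℕ) :
    labH μ (f ∘ S^[i]) (C ⊔ sig (g ∘ S^[i])) = labH μ f (C ⊔ sig g) := by
  have h : MeasurableSpace.comap S^[i] (C ⊔ sig g) = C ⊔ sig (g ∘ S^[i]) := by
    rw [MeasurableSpace.comap_sup, comap_iterate_eq hSC, sig, MeasurableSpace.comap_comp]
  rw [← h]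
  exact labH_comp (hS.iterate i) (sup_le hC hg) hf

lemma labH_comp_iterate [Fintype ι] (hC : C ≤ m0) (hS : MeasurePreserving S μ μ)
    (hSC : MeasurableSpace.comap S C = C) {f : X → ι} (hf : sig f ≤ m0) (i : ℕ) :
    labH μ (f ∘ S^[i]) C = labH μ f C := by
  conv_lhs => rw [← comap_iterate_eq hSC i]
  exact labH_comp (hS.iterate i) hC hf

lemma labH_joinLab_le [Fintype ι] (hC : C ≤ m0) (hS : MeasurePreserving S μ μ)
    (hSC : MeasurableSpace.comap S C = C) {f : X → ι} (hf : sig f ≤ m0) (n : ℕ) :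
    labH μ (joinLab S f n) C ≤ n * labH μ f C := by
  refine (labH_pi_le hC n (fun i => f ∘ S^[(i : ℕ)])
    fun i => sig_comp_le_of_measurable (hS.measurable.iterate i) hf).trans ?_
  simp [labH_comp_iterate hC hS hSC hf]

lemma hLab_bddBelow [Fintype ι] (hC : C ≤ m0) (hS : Measurable S) {f : X → ι}
    (hf : sig f ≤ m0) :
    BddBelow (range fun n : ℕ => (1 / (n + 1 : ℝ)) * labH μ (joinLab S f (n + 1)) C) := by
  refine ⟨0, ?_⟩
  rintro _ ⟨n, rfl⟩
  have := labH_nonneg (μ := μ) hC (sig_joinLab_le hS hf (n + 1))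
  positivity

lemma hLab_nonneg [Fintype ι] (hC : C ≤ m0) (hS : Measurable S) {f : X → ι}
    (hf : sig f ≤ m0) : 0 ≤ hLab μ S f C := by
  refine Real.iInf_nonneg fun n => ?_
  have := labH_nonneg (μ := μ) hC (sig_joinLab_le hS hf (n + 1))
  positivity

lemma hLab_le [Fintype ι] (hC : C ≤ m0) (hS : Measurable S) {f : X → ι} (hf : sig f ≤ m0)
    {n : ℕ} (hn : 0 < n) : hLab μ S f C ≤ (1 / (n : ℝ)) * labH μ (joinLab S f n) C := by
  obtain ⟨n, rfl⟩ := Nat.exists_eq_succ_of_ne_zero hn.ne'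
  have := ciInf_le (hLab_bddBelow (μ := μ) hC hS hf) n
  simpa [hLab] using this

lemma hLab_le_of_det [Fintype ι] [Fintype κ] (hC : C ≤ m0) (hS : Measurable S) {f : X → ι}
    {g : X → κ} (hg : sig g ≤ m0) (h : ∀ x y, g x = g y → f x = f y) :
    hLab μ S f C ≤ hLab μ S g C := by
  refine le_hLab fun n hn => (hLab_le hC hS ((sig_le_of_det h).trans hg) hn).trans ?_
  gcongr
  refine labH_le_of_det hC (sig_joinLab_le hS hg n) fun x y hxy => ?_
  ext i
  exact h _ _ (congrFun hxy i)

/-- `h(S, f | C) ≤ h(S, g | C) + H(f | C ∨ σ(g))`. -/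
lemma hLab_le_add [Fintype ι] [Fintype κ] (hC : C ≤ m0) (hS : MeasurePreserving S μ μ)
    (hSC : MeasurableSpace.comap S C = C) {f : X → ι} {g : X → κ} (hf : sig f ≤ m0)
    (hg : sig g ≤ m0) :
    hLab μ S f C ≤ hLab μ S g C + labH μ f (C ⊔ sig g) := by
  suffices h : hLab μ S f C - labH μ f (C ⊔ sig g) ≤ hLab μ S g C by linarith
  refine le_hLab fun k hk => ?_
  have hk' : (0 : ℝ) < k := by exact_mod_cast hk
  have hfk := sig_joinLab_le hS.measurable hf k
  have hgk := sig_joinLab_le hS.measurable hg k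
  have h1 : labH μ (joinLab S f k) C
      ≤ labH μ (joinLab S g k) C + labH μ (joinLab S f k) (C ⊔ sig (joinLab S g k)) := by
    rw [← labH_prod hC hfk hgk]
    exact labH_le_of_det hC (sig_prod_le hfk hgk) fun x y h => (Prod.mk.inj h).1
  have h2 : labH μ (joinLab S f k) (C ⊔ sig (joinLab S g k)) ≤ k * labH μ f (C ⊔ sig g) := by
    refine (labH_pi_le (sup_le hC hgk) k (fun i => f ∘ S^[(i : ℕ)])
      fun i => sig_comp_le_of_measurable (hS.measurable.iterate i) hf).trans ?_
    calc ∑ i : Fin k, labH μ (f ∘ S^[(i : ℕ)]) (C ⊔ sig (joinLab S g k))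
        ≤ ∑ i : Fin k, labH μ f (C ⊔ sig g) := by
          refine Finset.sum_le_sum fun i _ => ?_
          rw [← labH_comp_iterate_sup hC hS hSC hf hg i]
          refine labH_anti (sup_le_sup_left (sig_le_of_det fun x y h => ?_) _)
            (sup_le hC hgk) (sig_comp_le_of_measurable (hS.measurable.iterate i) hf)
          exact congrFun h i
      _ = k * labH μ f (C ⊔ sig g) := by simp
  have h3 := hLab_le (μ := μ) hC hS.measurable hf hk
  have h4 : (1 / (k : ℝ)) * labH μ (joinLab S f k) C
      ≤ (1 / (k : ℝ)) * (labH μ (joinLab S g k) C + k * labH μ f (C ⊔ sig g)) := by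
    gcongr; linarith
  rw [mul_add, ← mul_assoc, one_div_mul_cancel hk'.ne', one_mul] at h4
  linarith

/-- The itinerary of length `n * k` is read off from `k` consecutive blocks of length `n`. -/
lemma joinLab_blocks {f : X → ι} {n k : ℕ} (x y : X)
    (h : joinLab S^[n] (joinLab S f n) k x = joinLab S^[n] (joinLab S f n) k y) {i : ℕ}
    (hi : i < n * k) : f (S^[i] x) = f (S^[i] y) := by
  have hn : 0 < n := Nat.pos_of_ne_zero (by rintro rfl; simp at hi)
  have h1 := congrFun (congrFun h ⟨i / n, Nat.div_lt_of_lt_mul hi⟩) ⟨i % n, Nat.mod_lt _ hn⟩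
  simp only [joinLab, ← Function.iterate_mul, ← Function.iterate_add_apply,
    Nat.mod_add_div] at h1
  exact h1

/-- With the infimum definition, passing to `S^n` restricts the infimum to multiples of `n`. -/
lemma hLab_le_hLab_iterate [Fintype ι] (hC : C ≤ m0) (hS : Measurable S) {f : X → ι}
    (hf : sig f ≤ m0) {n : ℕ} (hn : 0 < n) :
    hLab μ S f C ≤ (1 / (n : ℝ)) * hLab μ S^[n] (joinLab S f n) C := by
  have hn' : (0 : ℝ) < n := by exact_mod_cast hn
  rw [one_div, inv_mul_eq_div, le_div_iff₀ hn']
  refine le_hLab fun k hk => ?_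
  have hk' : (0 : ℝ) < k := by exact_mod_cast hk
  have h1 := hLab_le (μ := μ) hC hS hf (Nat.mul_pos hn hk)
  have h2 : labH μ (joinLab S f (n * k)) C ≤ labH μ (joinLab S^[n] (joinLab S f n) k) C := by
    refine labH_le_of_det hC (sig_joinLab_le (hS.iterate n) (sig_joinLab_le hS hf n) k)
      fun x y h => ?_
    ext i
    exact joinLab_blocks x y h i.2
  calc hLab μ S f C * n ≤ (1 / ((n * k : ℕ) : ℝ)) * labH μ (joinLab S f (n * k)) C * n := by
        gcongr
    _ = (1 / (k : ℝ)) * labH μ (joinLab S f (n * k)) C := by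
        push_cast; field_simp
    _ ≤ _ := by gcongr

/-- The converse comparison: the `k`-step join under `S^n` of the `n`-step join is also the
`n`-step join under `S^k` of the `k`-step join, to which the trivial bound `labH_joinLab_le`
applies. -/
lemma hLab_iterate_le [Fintype ι] (hC : C ≤ m0) (hS : MeasurePreserving S μ μ)
    (hSC : MeasurableSpace.comap S C = C) {f : X → ι} (hf : sig f ≤ m0) {n : ℕ} (hn : 0 < n) :
    hLab μ S^[n] (joinLab S f n) C ≤ n * hLab μ S f C := by
  have hn' : (0 : ℝ) < n := by exact_mod_cast hn
  rw [← div_le_iff₀' hn']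
  refine le_hLab fun k hk => ?_
  have hk' : (0 : ℝ) < k := by exact_mod_cast hk
  rw [div_le_iff₀' hn']
  have hfk := sig_joinLab_le hS.measurable hf k
  have h1 := hLab_le (μ := μ) hC (hS.measurable.iterate n)
    (sig_joinLab_le hS.measurable hf n) hk
  -- both double joins list the itinerary up to time `n * k`
  have h2 : labH μ (joinLab S^[n] (joinLab S f n) k) C
      ≤ labH μ (joinLab S^[k] (joinLab S f k) n) C := by
    refine labH_le_of_det hC (sig_joinLab_le (hS.measurable.iterate k) hfk n) fun x y h => ?_
    ext i j
    simp only [joinLab, ← Function.iterate_mul, ← Function.iterate_add_apply]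
    refine joinLab_blocks x y h ?_
    have hi := i.2
    have hj := j.2
    nlinarith
  have h3 := labH_joinLab_le (μ := μ) hC (hS.iterate k) (comap_iterate_eq hSC k) hfk n
  calc hLab μ S^[n] (joinLab S f n) C ≤ _ := h1
    _ ≤ (1 / (k : ℝ)) * (n * labH μ (joinLab S f k) C) := by gcongr; exact h2.trans h3
    _ = _ := by ring

lemma hLab_iterate_le' [Fintype ι] (hC : C ≤ m0) (hS : MeasurePreserving S μ μ)
    (hSC : MeasurableSpace.comap S C = C) {f : X → ι} (hf : sig f ≤ m0) {n : ℕ} (hn : 0 < n) :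
    hLab μ S^[n] f C ≤ n * hLab μ S f C := by
  refine le_trans ?_ (hLab_iterate_le hC hS hSC hf hn)
  refine hLab_le_of_det hC (hS.measurable.iterate n) (sig_joinLab_le hS.measurable hf n)
    fun x y h => ?_
  exact congrFun h ⟨0, hn⟩

/-- Subadditivity `h(S, f ∨ g | C) ≤ h(S, f | C) + h(S, g | C)`. Comparing the `n`-step join of
`(f, g)` with that of `g` under `S^n` avoids having to know that the infimum is a limit. -/
lemma hLab_prod_le [Fintype ι] [Fintype κ] (hC : C ≤ m0) (hS : MeasurePreserving S μ μ)
    (hSC : MeasurableSpace.comap S C = C) {f : X → ι} {g : X → κ} (hf : sig f ≤ m0)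
    (hg : sig g ≤ m0) :
    hLab μ S (fun x => (f x, g x)) C ≤ hLab μ S f C + hLab μ S g C := by
  suffices h : hLab μ S (fun x => (f x, g x)) C - hLab μ S g C ≤ hLab μ S f C by linarith
  refine le_hLab fun k hk => ?_
  have hk' : (0 : ℝ) < k := by exact_mod_cast hk
  have hfg := sig_prod_le hf hg
  have hfk := sig_joinLab_le hS.measurable hf k
  have hgk := sig_joinLab_le hS.measurable hg k
  have h1 := hLab_le_hLab_iterate (μ := μ) hC hS.measurable hfg hk
  have h2 := hLab_le_add (μ := μ) hC (hS.iterate k) (comap_iterate_eq hSC k)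
    (sig_joinLab_le hS.measurable hfg k) hgk
  have h3 := hLab_iterate_le (μ := μ) hC hS hSC hg hk
  have hCg := sup_le hC hgk
  have h4 : labH μ (joinLab S (fun x => (f x, g x)) k) (C ⊔ sig (joinLab S g k))
      ≤ labH μ (joinLab S f k) C := by
    calc _ ≤ labH μ (fun x => (joinLab S f k x, joinLab S g k x)) (C ⊔ sig (joinLab S g k)) := by
          refine labH_le_of_det hCg (sig_prod_le hfk hgk) fun x y h => ?_
          have h := Prod.mk.inj h
          ext i
          · exact congrFun h.1 i
          · exact congrFun h.2 i
      _ ≤ labH μ (joinLab S f k) (C ⊔ sig (joinLab S g k))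
          + labH μ (joinLab S g k) (C ⊔ sig (joinLab S g k)) := labH_prod_le hCg hfk hgk
      _ = labH μ (joinLab S f k) (C ⊔ sig (joinLab S g k)) := by
          rw [labH_eq_zero hCg le_sup_right, add_zero]
      _ ≤ _ := labH_anti le_sup_left hCg hfk
  have h5 : (1 / (k : ℝ)) * hLab μ S^[k] (joinLab S (fun x => (f x, g x)) k) C
      ≤ (1 / (k : ℝ)) * (k * hLab μ S g C + labH μ (joinLab S f k) C) := by
    gcongr; linarith
  rw [mul_add, ← mul_assoc, one_div_mul_cancel hk'.ne', one_mul] at h5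
  linarith

lemma hLab_eq_zero_of_sig_le [Fintype ι] (hC : C ≤ m0) (hS : Measurable S) {f : X → ι}
    (hf : sig f ≤ C) : hLab μ S f C = 0 := by
  refine le_antisymm ?_ (hLab_nonneg hC hS (hf.trans hC))
  refine (hLab_le hC hS (hf.trans hC) one_pos).trans ?_
  rw [labH_eq_zero hC, mul_zero]
  exact (sig_le_of_det fun x y h => funext fun i => by
    have : (i : ℕ) = 0 := by omega
    simpa [joinLab, this] using h).trans hf

lemma hLab_pi_eq_zero [Fintype ι] (hC : C ≤ m0) (hS : MeasurePreserving S μ μ)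
    (hSC : MeasurableSpace.comap S C = C) (n : ℕ) (F : Fin n → X → ι)
    (hF : ∀ k, sig (F k) ≤ m0) (h0 : ∀ k, hLab μ S (F k) C = 0) :
    hLab μ S (fun x k => F k x) C = 0 := by
  induction n with
  | zero => exact hLab_eq_zero_of_sig_le hC hS.measurable (sig_pi_le fun k => k.elim0)
  | succ n ih =>
    have hF' : sig (fun x (k : Fin n) => F k.succ x) ≤ m0 := sig_pi_le fun k => hF _
    refine le_antisymm ?_ (hLab_nonneg hC hS.measurable (sig_pi_le hF))
    calc hLab μ S (fun x k => F k x) C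
        ≤ hLab μ S (fun x => (F 0 x, fun k : Fin n => F k.succ x)) C := by
          refine hLab_le_of_det hC hS.measurable (sig_prod_le (hF 0) hF') fun x y h => ?_
          simp only [Prod.mk.injEq] at h
          ext k
          refine Fin.cases h.1 (fun k => congrFun h.2 k) k
      _ ≤ hLab μ S (F 0) C + hLab μ S (fun x (k : Fin n) => F k.succ x) C :=
          hLab_prod_le hC hS hSC (hF 0) hF'
      _ = 0 := by rw [h0, ih _ (fun k => hF _) fun k => h0 _, add_zero]

end Dynamics

/-! ### Approximation -/

section Approximation

/-- Modulus of continuity of `-x log x` on `[0,1]`, in a form that can be integrated. -/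
lemma exists_negMulLog_modulus {ε : ℝ} (hε : 0 < ε) :
    ∃ K : ℝ, 0 ≤ K ∧ ∀ x ∈ Icc (0 : ℝ) 1, ∀ y ∈ Icc (0 : ℝ) 1,
      Real.negMulLog x ≤ Real.negMulLog y + ε + K * |x - y| := by
  have huc : UniformContinuousOn Real.negMulLog (Icc (0 : ℝ) 1) :=
    isCompact_Icc.uniformContinuousOn_of_continuous Real.continuous_negMulLog.continuousOn
  obtain ⟨δ, hδ, h⟩ := Metric.uniformContinuousOn_iff.1 huc ε hε
  refine ⟨1 / δ, by positivity, fun x hx y hy => ?_⟩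
  have hy0 := Real.negMulLog_nonneg hy.1 hy.2
  have hx1 : Real.negMulLog x ≤ 1 := by
    linarith [Real.negMulLog_le_one_sub_self hx.1, hx.1]
  rcases lt_or_ge |x - y| δ with hlt | hge
  · have h1 := h x hx y hy (by rwa [Real.dist_eq])
    rw [Real.dist_eq] at h1
    have h2 := (abs_lt.1 h1).2
    have : 0 ≤ 1 / δ * |x - y| := by positivity
    linarith
  · have : 1 ≤ 1 / δ * |x - y| := by
      rw [one_div, inv_mul_eq_div, le_div_iff₀ hδ]; linarith
    linarith

variable {m0 : MeasurableSpace X} {μ : Measure X} [IsProbabilityMeasure μ]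

/-- If the conditional probabilities of `f` given `P` are `L¹`-close to `D`-measurable functions
with `D ≤ P`, conditioning on `D` instead of `P` increases the entropy of `f` only slightly. -/
lemma exists_labH_le_add (μ : Measure X) [IsProbabilityMeasure μ] (ι : Type*) [Fintype ι]
    {ε : ℝ} (hε : 0 < ε) :
    ∃ δ : ℝ, 0 < δ ∧ ∀ (f : X → ι) (D P : MeasurableSpace X) (a : ι → X → ℝ),
      sig f ≤ m0 → D ≤ P → P ≤ m0 → (∀ i, StronglyMeasurable[D] (a i)) →
      (∀ i, Integrable (a i) μ) → (∀ i, ∫ x, |cp μ P f i x - a i x| ∂μ ≤ δ) →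
      labH μ f D ≤ labH μ f P + ε := by
  set N : ℝ := Fintype.card ι + 1 with hN
  have hN0 : 0 < N := by positivity
  obtain ⟨K, hK, hmod⟩ := exists_negMulLog_modulus (ε := ε / (2 * N)) (by positivity)
  refine ⟨ε / (4 * N * (K + 1)), by positivity, fun f D P a hf hDP hP ha hai hδ => ?_⟩
  set δ : ℝ := ε / (4 * N * (K + 1)) with hδdef
  have hD := hDP.trans hP
  have hdiff : ∀ i, Integrable (fun x => cp μ P f i x - a i x) μ := fun i =>
    (integrable_cp f i).sub (hai i)
  have hL1 : ∀ i, ∫ x, |cp μ D f i x - cp μ P f i x| ∂μ ≤ 2 * δ := by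
    intro i
    have h1 : μ[fun x => cp μ P f i x - a i x | D] =ᵐ[μ] fun x => cp μ D f i x - a i x := by
      have e1 : μ[cp μ P f i - a i | D] =ᵐ[μ] μ[cp μ P f i | D] - μ[a i | D] :=
        condExp_sub (integrable_cp f i) (hai i) D
      have e2 : μ[cp μ P f i | D] =ᵐ[μ] cp μ D f i := condExp_condExp_of_le hDP hP
      have e3 : μ[a i | D] = a i := condExp_of_stronglyMeasurable hD (ha i) (hai i)
      filter_upwards [e1, e2] with x h1 h2
      change (μ[cp μ P f i - a i | D]) x = _
      rw [h1, e3, Pi.sub_apply, h2]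
    have h2 : ∫ x, |cp μ D f i x - a i x| ∂μ ≤ δ := by
      refine le_trans (le_of_eq ?_) ((integral_abs_condExp_le (m := D) _).trans (hδ i))
      exact integral_congr_ae (by filter_upwards [h1] with x hx; rw [hx])
    have hi1 : Integrable (fun x => |cp μ D f i x - a i x|) μ :=
      ((integrable_cp f i).sub (hai i)).abs
    calc ∫ x, |cp μ D f i x - cp μ P f i x| ∂μ
        ≤ ∫ x, (|cp μ D f i x - a i x| + |cp μ P f i x - a i x|) ∂μ := by
          refine integral_mono ((integrable_cp f i).sub (integrable_cp f i)).abs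
            (hi1.add (hdiff i).abs) fun x => ?_
          have := abs_sub_le (cp μ D f i x) (a i x) (cp μ P f i x)
          rw [abs_sub_comm (a i x)] at this
          exact this
      _ = _ := integral_add hi1 (hdiff i).abs
      _ ≤ 2 * δ := by linarith [hδ i]
  have hterm : ∀ i, ∫ x, Real.negMulLog (cp μ D f i x) ∂μ
      ≤ ∫ x, Real.negMulLog (cp μ P f i x) ∂μ + (ε / (2 * N) + K * (2 * δ)) := by
    intro i
    have hiP := integrable_negMulLog_cp (μ := μ) hP hf i
    have hid : Integrable (fun x => K * |cp μ D f i x - cp μ P f i x|) μ :=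
      ((integrable_cp f i).sub (integrable_cp f i)).abs.const_mul K
    calc ∫ x, Real.negMulLog (cp μ D f i x) ∂μ
        ≤ ∫ x, (Real.negMulLog (cp μ P f i x) + ε / (2 * N)
            + K * |cp μ D f i x - cp μ P f i x|) ∂μ := by
          refine integral_mono_ae (integrable_negMulLog_cp hD hf i)
            ((hiP.add (integrable_const _)).add hid) ?_
          filter_upwards [cp_mem (μ := μ) hD hf i, cp_mem (μ := μ) hP hf i] with x h1 h2
          exact hmod _ h1 _ h2
      _ = ∫ x, Real.negMulLog (cp μ P f i x) ∂μ + ε / (2 * N)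
            + K * ∫ x, |cp μ D f i x - cp μ P f i x| ∂μ := by
          have e1 := integral_add (μ := μ) (hiP.add (integrable_const (ε / (2 * N)))) hid
          have e2 := integral_add (μ := μ) hiP (integrable_const (ε / (2 * N)))
          simp only [Pi.add_apply] at e1
          rw [e1, e2, integral_const_mul]
          simp
      _ ≤ _ := by
          have := mul_le_mul_of_nonneg_left (hL1 i) hK
          linarith
  rw [labH_eq, labH_eq]
  refine (Finset.sum_le_sum fun i _ => hterm i).trans ?_
  rw [Finset.sum_add_distrib]
  gcongr
  rw [Finset.sum_const, nsmul_eq_mul, Finset.card_univ]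
  have hKδ : K * (2 * δ) ≤ ε / (2 * N) := by
    rw [hδdef, show K * (2 * (ε / (4 * N * (K + 1)))) = ε / (2 * N) * (K / (K + 1)) by
      field_simp; ring]
    refine mul_le_of_le_one_right (by positivity) ?_
    exact div_le_one_of_le₀ (by linarith) (by linarith)
  calc (Fintype.card ι : ℝ) * (ε / (2 * N) + K * (2 * δ))
      ≤ N * (ε / (2 * N) + ε / (2 * N)) := by
        gcongr
        linarith
    _ = ε := by field_simp; ring

/-- Every finite labelling is approximated, in the sense of conditional entropy, by conditioning
on a finite `P`-measurable labelling: the level sets of the conditional probabilities. -/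
lemma exists_sig_le_labH_le {ι : Type*} [Fintype ι] {C P : MeasurableSpace X} (hCP : C ≤ P)
    (hP : P ≤ m0) {f : X → ι} (hf : sig f ≤ m0) {ε : ℝ} (hε : 0 < ε) :
    ∃ (N : ℕ) (ξ : X → (ι → Fin (N + 1))), sig ξ ≤ P ∧
      labH μ f (C ⊔ sig ξ) ≤ labH μ f P + ε := by
  classical
  obtain ⟨δ, hδ, h⟩ := exists_labH_le_add μ ι hε
  obtain ⟨N, hN⟩ := exists_nat_one_div_lt hδ
  set M : ℕ := N + 1 with hM
  have hM0 : (0 : ℝ) < M := by positivity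
  have hlt : ∀ y : ℝ, min ⌊(M : ℝ) * y⌋₊ M < M + 1 := fun y =>
    Nat.lt_succ_of_le (min_le_right _ _)
  set ξ : X → (ι → Fin (M + 1)) := fun x i => ⟨min ⌊(M : ℝ) * cp μ P f i x⌋₊ M, hlt _⟩ with hξ
  have hξP : sig ξ ≤ P := by
    refine sig_pi_le fun i => ?_
    have hm : Measurable[P] (fun x => ⌊(M : ℝ) * cp μ P f i x⌋₊) :=
      Nat.measurable_floor.comp
        ((stronglyMeasurable_condExp (m := P)).measurable.const_mul (M : ℝ))
    have : sig (fun x => ⌊(M : ℝ) * cp μ P f i x⌋₊) ≤ P := hm.comap_le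
    refine le_trans (sig_le_of_det fun x y hxy => ?_) this
    simp only [Fin.mk.injEq]
    rw [hxy]
  have hlev : ∀ i, StronglyMeasurable[sig ξ] fun x => ((ξ x i : ℕ) : ℝ) / M := fun i =>
    (show Measurable[sig ξ] fun x => ((ξ x i : ℕ) : ℝ) / M from fun t _ =>
      ⟨(fun s : ι → Fin (M + 1) => ((s i : ℕ) : ℝ) / M) ⁻¹' t, trivial, rfl⟩).stronglyMeasurable
  refine ⟨M, ξ, hξP, h f _ P (fun i x => ((ξ x i : ℕ) : ℝ) / M) hf (sup_le hCP hξP) hP ?_ ?_ ?_⟩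
  · intro i
    exact (hlev i).mono le_sup_right
  · intro i
    refine Integrable.of_bound
      ((hlev i).mono (hξP.trans hP)).aestronglyMeasurable 1
      (Eventually.of_forall fun x => ?_)
    rw [Real.norm_of_nonneg (by positivity)]
    refine div_le_one_of_le₀ ?_ hM0.le
    exact_mod_cast Nat.le_of_lt_succ (ξ x i).2
  · intro i
    have hb : ∀ᵐ x ∂μ, ‖|cp μ P f i x - ((ξ x i : ℕ) : ℝ) / M|‖ ≤ δ := by
      filter_upwards [cp_mem (μ := μ) hP hf i] with x hx
      have hle : ⌊(M : ℝ) * cp μ P f i x⌋₊ ≤ M := by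
        refine Nat.floor_le_of_le ?_
        nlinarith [hx.2]
      have hval : ((ξ x i : ℕ) : ℝ) = (⌊(M : ℝ) * cp μ P f i x⌋₊ : ℝ) := by
        simp only [hξ, min_eq_left hle]
      rw [Real.norm_eq_abs, abs_abs, hval]
      have h1 := Nat.floor_le (mul_nonneg hM0.le hx.1)
      have h2 := Nat.lt_floor_add_one ((M : ℝ) * cp μ P f i x)
      have h3 : cp μ P f i x - (⌊(M : ℝ) * cp μ P f i x⌋₊ : ℝ) / M
          = ((M : ℝ) * cp μ P f i x - ⌊(M : ℝ) * cp μ P f i x⌋₊) / M := by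
        field_simp
      rw [h3, abs_of_nonneg (div_nonneg (by linarith) hM0.le)]
      have h4 : (1 : ℝ) / M < δ := by rw [hM]; push_cast; exact hN
      refine le_trans ?_ h4.le
      gcongr
      linarith
    have := norm_integral_le_of_norm_le_const hb
    simp only [probReal_univ, mul_one] at this
    exact (le_abs_self _).trans this

end Approximation

/-! ### The relative Pinsker σ-algebra -/

section Pinsker

variable {C m0 : MeasurableSpace X} {μ : Measure X} [IsProbabilityMeasure μ] {S : X → X}

lemma sig_mem_le {m : MeasurableSpace X} {s : Set X} (hs : MeasurableSet[m] s) :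
    sig (fun x => x ∈ s) ≤ m := by
  rw [sig_le_iff]
  intro p
  by_cases hp : p
  · convert hs using 1
    ext x; simp [hp]
  · convert hs.compl using 1
    ext x; simp [hp]

/-- Sets of zero entropy are closed under countable unions: the finite unions are determined by
zero-entropy labellings and converge in measure to the whole union. -/
lemma hLab_iUnion_eq_zero (hC : C ≤ m0) (hS : MeasurePreserving S μ μ)
    (hSC : MeasurableSpace.comap S C = C) {s : ℕ → Set X} (hs : ∀ n, MeasurableSet (s n))
    (h0 : ∀ n, hLab μ S (fun x => x ∈ s n) C = 0) :
    hLab μ S (fun x => x ∈ ⋃ n, s n) C = 0 := by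
  classical
  set A : Set X := ⋃ n, s n with hA
  have hAm : MeasurableSet A := MeasurableSet.iUnion hs
  have hAs := sig_mem_le hAm
  refine le_antisymm (le_of_forall_pos_le_add fun ε hε => ?_) (hLab_nonneg hC hS.measurable hAs)
  obtain ⟨δ, hδ, h⟩ := exists_labH_le_add μ Prop hε
  let B : ℕ → Set X := fun n => ⋃ k : Fin n, s k
  have hBm : ∀ n, MeasurableSet (B n) := fun n => MeasurableSet.iUnion fun k => hs k
  let a : ℕ → Prop → X → ℝ := fun n p =>
    ((fun x => x ∈ B n) ⁻¹' {p}).indicator fun _ => (1 : ℝ)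
  have hlim : ∀ p : Prop, Tendsto (fun n => ∫ x, |cp μ m0 (fun x => x ∈ A) p x - a n p x| ∂μ)
      atTop (𝓝 0) := by
    intro p
    have hcp : cp μ m0 (fun x => x ∈ A) p
        = ((fun x => x ∈ A) ⁻¹' {p}).indicator fun _ => (1 : ℝ) :=
      condExp_of_stronglyMeasurable le_rfl
        (stronglyMeasurable_const.indicator (measurableSet_preimage_of_sig_le hAs _))
        (integrable_ind hAs p)
    rw [hcp]
    have hz : ∫ x : X, (0 : ℝ) ∂μ = 0 := by simp
    rw [← hz]
    refine tendsto_integral_of_dominated_convergence (fun _ => (1 : ℝ)) ?_ (integrable_const 1)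
      ?_ ?_
    · intro n
      exact ((integrable_ind hAs p).sub
        (integrable_ind (sig_mem_le (hBm n)) p)).abs.aestronglyMeasurable
    · intro n
      refine Eventually.of_forall fun x => ?_
      simp only [a, indicator_apply]
      split_ifs <;> simp
    · refine Eventually.of_forall fun x => tendsto_const_nhds.congr' ?_
      have hev : ∀ᶠ n in atTop, (x ∈ B n ↔ x ∈ A) := by
        by_cases hx : x ∈ A
        · obtain ⟨k, hk⟩ := mem_iUnion.1 hx
          filter_upwards [eventually_gt_atTop k] with n hn
          exact ⟨fun _ => hx, fun _ => mem_iUnion.2 ⟨⟨k, hn⟩, hk⟩⟩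
        · refine Eventually.of_forall fun n => ⟨fun hb => ?_, fun h => absurd h hx⟩
          obtain ⟨k, hk⟩ := mem_iUnion.1 hb
          exact mem_iUnion.2 ⟨k, hk⟩
      filter_upwards [hev] with n hn
      simp only [a, indicator_apply, mem_preimage, mem_singleton_iff, hn, sub_self, abs_zero]
  have hev : ∀ᶠ n in atTop, ∀ p : Prop,
      ∫ x, |cp μ m0 (fun x => x ∈ A) p x - a n p x| ∂μ ≤ δ :=
    eventually_all.2 fun p => ((hlim p).eventually_lt_const hδ).mono fun _ h => h.le
  obtain ⟨n, hn⟩ := hev.exists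
  let ξ : X → (Fin n → Prop) := fun x k => x ∈ s k
  have hξ : sig ξ ≤ m0 := sig_pi_le fun k => sig_mem_le (hs k)
  have hξ0 : hLab μ S ξ C = 0 :=
    hLab_pi_eq_zero hC hS hSC n (fun k x => x ∈ s k) (fun k => sig_mem_le (hs k)) fun k => h0 k
  have hBξ : sig (fun x => x ∈ B n) ≤ sig ξ := sig_le_of_det fun x y hxy => by
    have : ∀ k : Fin n, (x ∈ s k) = (y ∈ s k) := fun k => congrFun hxy k
    simp only [B, mem_iUnion, this]
  have h1 := h (fun x => x ∈ A) (C ⊔ sig ξ) m0 (a n) hAs (sup_le hC hξ) le_rfl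
    (fun p => stronglyMeasurable_const.indicator
      (measurableSet_preimage_of_sig_le (hBξ.trans le_sup_right) _))
    (fun p => integrable_ind (sig_mem_le (hBm n)) p) hn
  have h2 := hLab_le_add (μ := μ) hC hS hSC hAs hξ
  rw [labH_eq_zero le_rfl hAs] at h1
  linarith

/-- Every set of the relative Pinsker σ-algebra itself has zero relative entropy. -/
lemma relPinsker_measurableSet (hC : C ≤ m0) (hS : MeasurePreserving S μ μ)
    (hSC : MeasurableSpace.comap S C = C) {s : Set X}
    (hs : MeasurableSet[relPinsker μ S C] s) :
    MeasurableSet[m0] s ∧ hLab μ S (fun x => x ∈ s) C = 0 := by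
  have hgen : ∀ t, (∃ α : FinPart X m0, hPartCond μ S α.atom C = 0 ∧ ∃ i, α.atom i = t) →
      MeasurableSet[m0] t ∧ hLab μ S (fun x => x ∈ t) C = 0 := by
    rintro _ ⟨α, hα, i, rfl⟩
    obtain ⟨f, hf, hfα⟩ := α.exists_lab
    have hmi := α.meas i
    rw [hfα, hPartCond_eq_hLab] at hα
    refine ⟨hmi, le_antisymm ?_ (hLab_nonneg hC hS.measurable (sig_mem_le hmi))⟩
    refine (hLab_le_of_det hC hS.measurable hf fun x y h => ?_).trans hα.le
    rw [hfα]
    simp only [mem_preimage, h]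
  let Z : MeasurableSpace X :=
    { MeasurableSet' := fun s => MeasurableSet[m0] s ∧ hLab μ S (fun x => x ∈ s) C = 0
      measurableSet_empty := ⟨@MeasurableSet.empty _ m0,
        hLab_eq_zero_of_sig_le hC hS.measurable (sig_mem_le (@MeasurableSet.empty _ C))⟩
      measurableSet_compl := fun s hs => ⟨@MeasurableSet.compl _ _ m0 hs.1, le_antisymm
        ((hLab_le_of_det hC hS.measurable (sig_mem_le hs.1) fun x y h => by
          simp only [mem_compl_iff, h]).trans hs.2.le)
        (hLab_nonneg hC hS.measurable (sig_mem_le hs.1.compl))⟩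
      measurableSet_iUnion := fun s hs => ⟨@MeasurableSet.iUnion _ _ m0 _ _ fun n => (hs n).1,
        hLab_iUnion_eq_zero hC hS hSC (fun n => (hs n).1) fun n => (hs n).2⟩ }
  have hle : relPinsker μ S C ≤ Z := MeasurableSpace.generateFrom_le hgen
  exact hle s hs

lemma le_relPinsker (hC : C ≤ m0) (hS : Measurable S) : C ≤ relPinsker μ S C := by
  classical
  intro s hs
  let f : X → Fin 2 := fun x => if x ∈ s then 0 else 1
  have hf : sig f ≤ C := (sig_le_of_det fun x y h => by simp only [f, h]).trans (sig_mem_le hs)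
  refine MeasurableSpace.measurableSet_generateFrom
    ⟨⟨2, fun i => f ⁻¹' {i}, fun i => measurableSet_preimage_of_sig_le (hf.trans hC) _,
      fun i j hij => ?_, ?_⟩, ?_, 0, ?_⟩
  · exact Disjoint.preimage f (by simpa using hij)
  · ext x; simp
  · rw [hPartCond_eq_hLab]
    exact hLab_eq_zero_of_sig_le hC hS hf
  · ext x
    simp [f]

/-- Finite labellings measurable for the relative Pinsker σ-algebra have zero relative entropy. -/
lemma hLab_eq_zero_of_sig_le_relPinsker [Fintype κ] (hC : C ≤ m0) (hS : MeasurePreserving S μ μ)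
    (hSC : MeasurableSpace.comap S C = C) {ξ : X → κ} (hξ : sig ξ ≤ relPinsker μ S C) :
    hLab μ S ξ C = 0 := by
  let e := Fintype.equivFin κ
  have hs : ∀ k, MeasurableSet[m0] (ξ ⁻¹' {k}) ∧ hLab μ S (fun x => x ∈ ξ ⁻¹' {k}) C = 0 :=
    fun k => relPinsker_measurableSet hC hS hSC (measurableSet_preimage_of_sig_le hξ _)
  have hξm : sig ξ ≤ m0 := sig_le_iff.2 fun k => (hs k).1
  refine le_antisymm ?_ (hLab_nonneg hC hS.measurable hξm)
  rw [← hLab_pi_eq_zero (μ := μ) hC hS hSC (Fintype.card κ)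
    (fun k x => x ∈ ξ ⁻¹' {e.symm k}) (fun k => sig_mem_le (hs _).1) fun k => (hs _).2]
  refine hLab_le_of_det hC hS.measurable (sig_pi_le fun k => sig_mem_le (hs _).1) fun x y h => ?_
  have := congrFun h (e (ξ y))
  simpa using this

/-- Conditioning on an invariant `C` or on its relative Pinsker σ-algebra gives the same
dynamical entropy for every power of `S`. -/
lemma hLab_iterate_eq_relPinsker [Fintype ι] (hC : C ≤ m0) (hS : MeasurePreserving S μ μ)
    (hSC : MeasurableSpace.comap S C = C) {ℓ : ℕ} (hℓ : 0 < ℓ) {f : X → ι} (hf : sig f ≤ m0) :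
    hLab μ S^[ℓ] f C = hLab μ S^[ℓ] f (relPinsker μ S C) := by
  classical
  have hCP : C ≤ relPinsker μ S C := le_relPinsker hC hS.measurable
  have hP : relPinsker μ S C ≤ m0 := fun s hs => (relPinsker_measurableSet hC hS hSC hs).1
  have hSℓ := hS.iterate ℓ
  refine le_antisymm (le_hLab fun n hn => ?_) (le_hLab fun n hn => ?_)
  · have hn' : (0 : ℝ) < n := by exact_mod_cast hn
    set F := joinLab S^[ℓ] f n with hF
    have hFm : sig F ≤ m0 := sig_joinLab_le hSℓ.measurable hf n
    suffices h : hLab μ (S^[ℓ])^[n] F C ≤ labH μ F (relPinsker μ S C) by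
      refine (hLab_le_hLab_iterate hC hSℓ.measurable hf hn).trans ?_
      gcongr
    refine le_of_forall_pos_le_add fun ε hε => ?_
    obtain ⟨N, ξ, hξ, hle⟩ := exists_sig_le_labH_le (μ := μ) hCP hP hFm hε
    have hξ0 : hLab μ (S^[ℓ])^[n] ξ C ≤ 0 := by
      have h1 := hLab_iterate_le' (μ := μ) hC hS hSC (hξ.trans hP) (Nat.mul_pos hℓ hn)
      rw [hLab_eq_zero_of_sig_le_relPinsker hC hS hSC hξ, mul_zero, Function.iterate_mul] at h1
      exact h1
    have h2 := hLab_le_add (μ := μ) hC (hSℓ.iterate n)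
      (comap_iterate_eq (comap_iterate_eq hSC ℓ) n) hFm (hξ.trans hP)
    linarith
  · refine (hLab_le hP hSℓ.measurable hf hn).trans ?_
    gcongr
    exact labH_anti hCP hP (sig_joinLab_le hSℓ.measurable hf n)

end Pinsker

end Labels

/-- **Lemma (conditioning on the factor or on the relative Pinsker σ-algebra gives the same
entropy).** Let `π : (X,B,μ,T) → (Z,A,λ,R)` be a factor map between invertible Lebesgue
systems and `P_μ(π)` the relative Pinsker σ-algebra of `(X,B,μ,T)` with respect to `π`.
Then for every `ℓ ≥ 1` and every finite measurable partition `α` of `X`,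
`h_μ(T^ℓ, α | π⁻¹(A)) = h_μ(T^ℓ, α | P_μ(π))`. -/
theorem hPartCond_pow_comap_eq_relPinsker
    {X Z : Type*}
    [mX : MeasurableSpace X] [StandardBorelSpace X]
    [mZ : MeasurableSpace Z] [StandardBorelSpace Z]
    (μ : Measure X) (lam : Measure Z)
    [IsProbabilityMeasure μ] [IsProbabilityMeasure lam]
    (T : X → X) (R : Z → Z)
    (hTbij : Function.Bijective T) (hRbij : Function.Bijective R)
    (hT : MeasurePreserving T μ μ) (hR : MeasurePreserving R lam lam)
    (π : X → Z) (hπ : MeasurePreserving π μ lam) (hπT : π ∘ T = R ∘ π)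
    (ℓ : ℕ) (hℓ : 1 ≤ ℓ) (α : FinPart X mX) :
    hPartCond μ (T^[ℓ]) α.atom (MeasurableSpace.comap π mZ) =
      hPartCond μ (T^[ℓ]) α.atom (relPinsker μ T (MeasurableSpace.comap π mZ)) := by
  obtain ⟨f, hf, hfα⟩ := α.exists_lab
  rw [hfα, hPartCond_eq_hLab, hPartCond_eq_hLab]
  refine hLab_iterate_eq_relPinsker hπ.measurable.comap_le hT ?_ hℓ hf
  have hRemb : MeasurableEmbedding R := hR.measurable.measurableEmbedding hRbij.injective
  rw [MeasurableSpace.comap_comp, hπT, ← MeasurableSpace.comap_comp, hRemb.comap_eq]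
end

section
/- Let π₁: (X,B,μ,T) → (Y,D,ν,S) be a factor map between invertible Lebesgue systems with disintegration μ = ∫_Y μ_y dν(y), and suppose μ_y is non-atomic for ν-a.e. y ∈ Y. If B ∈ B satisfies μ_y(B) ≥ r > 0 for ν-a.e. y ∈ Y, then for any 0 ≤ s ≤ r there exists a measurable set B_s ⊆ B such that μ_y(B_s) = s for ν-a.e. y ∈ Y. -/
/-!
The set `B_s` is cut out of `B` by the conditional distribution function. Embed the standard Borel
space `X` measurably into `ℝ` by `φ` and put
`B_s = {x ∈ B | μ_{π₁ x} (B ∩ {φ ≤ φ x}) ≤ s}`.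
It is measurable because the fiber measures form a Markov kernel
(`Kernel.measurable_kernel_prodMk_left`). Since `μ_y` lives on the fiber over `y`, its value at
`B_s` is that of `m`, the image of `μ_y|_B` under `φ`, at `{t | m (Iic t) ≤ s}`. As `m` has no
atoms and total mass at least `s`, this value is `s` (`measure_setOf_measure_Iic_le`), the familiar
fact that the distribution function of an atomless probability law
is uniformly distributed under that law.
-/

open MeasureTheory Filter Set Topology
open scoped ENNReal

/-- Sublevel sets of the distribution function of an atomless finite measure have the expected
mass. The sublevel set is a lower set; any compact subset of it lies below its own maximum, and
any compact subset of its complement lies above its own minimum, so inner regularity bounds the mass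
of the set by `s` and that of the complement by `m univ - s`. -/
lemma measure_setOf_measure_Iic_le (m : Measure ℝ) [IsFiniteMeasure m] [NullSingletonClass m]
    (s : ℝ≥0∞) (hs : s ≤ m univ) : m {t | m (Iic t) ≤ s} = s := by
  set A : Set ℝ := {t | m (Iic t) ≤ s}
  have hlow : IsLowerSet A := fun a b hba ha =>
    (measure_mono (Iic_subset_Iic.2 hba)).trans ha
  have hAm : MeasurableSet A := hlow.ordConnected.measurableSet
  apply le_antisymm
  · rw [hAm.measure_eq_iSup_isCompact]
    refine iSup₂_le fun K hKA => iSup_le fun hK => ?_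
    rcases K.eq_empty_or_nonempty with rfl | hne
    · simp
    · obtain ⟨t, htK, ht⟩ := hK.exists_isGreatest hne
      exact (measure_mono fun u hu => ht hu).trans (hKA htK)
  · have hc : m Aᶜ ≤ m univ - s := by
      rw [hAm.compl.measure_eq_iSup_isCompact]
      refine iSup₂_le fun K hKA => iSup_le fun hK => ?_
      rcases K.eq_empty_or_nonempty with rfl | hne
      · simp
      · obtain ⟨t, htK, ht⟩ := hK.exists_isLeast hne
        have hts : s ≤ m (Iic t) := (not_le.1 (show ¬ m (Iic t) ≤ s from hKA htK)).le
        calc m K ≤ m (Ici t) := measure_mono fun u hu => ht hu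
          _ = m (Iic t)ᶜ := by rw [compl_Iic]; exact measure_congr Ioi_ae_eq_Ici.symm
          _ = m univ - m (Iic t) := measure_compl measurableSet_Iic (measure_ne_top _ _)
          _ ≤ m univ - s := tsub_le_tsub_left hts _
    have h : (m univ - s) + s ≤ (m univ - s) + m A := by
      calc (m univ - s) + s = m A + m Aᶜ := by
            rw [tsub_add_cancel_of_le hs, measure_add_measure_compl hAm]
        _ ≤ m A + (m univ - s) := by gcongr
        _ = (m univ - s) + m A := add_comm _ _
    exact (ENNReal.add_le_add_iff_left
      (ne_top_of_le_ne_top (measure_ne_top m univ) tsub_le_self)).1 h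

/-- **Lemma (Rohlin).** Let `π₁ : (X,B,μ,T) → (Y,D,ν,S)` be a factor map between invertible
Lebesgue systems with disintegration `μ = ∫_Y μ_y dν(y)`, and suppose `μ_y` is non-atomic for
`ν`-a.e. `y`. If `B ∈ B` satisfies `μ_y(B) ≥ r > 0` for `ν`-a.e. `y`, then for any
`0 ≤ s ≤ r` there is a measurable set `B_s ⊆ B` with `μ_y(B_s) = s` for `ν`-a.e. `y`. -/
theorem rohlin_exists_subset_of_constant_fiber_measure
    {X Y : Type*}
    [mX : MeasurableSpace X] [StandardBorelSpace X]
    [mY : MeasurableSpace Y] [StandardBorelSpace Y]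
    (μ : Measure X) (ν : Measure Y)
    [IsProbabilityMeasure μ] [IsProbabilityMeasure ν]
    (T : X → X) (S : Y → Y)
    (hTbij : Function.Bijective T) (hSbij : Function.Bijective S)
    (hT : MeasurePreserving T μ μ) (hS : MeasurePreserving S ν ν)
    (π₁ : X → Y) (hπ₁ : MeasurePreserving π₁ μ ν) (hπ₁T : π₁ ∘ T = S ∘ π₁)
    (μy : Y → Measure X) (hμyprob : ∀ y, IsProbabilityMeasure (μy y))
    (hfiber : ∀ᵐ y ∂ν, μy y (π₁ ⁻¹' {y}) = 1)
    (hμymeas : ∀ s : Set X, MeasurableSet[mX] s → Measurable fun y => μy y s)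
    (hdisint : ∀ s : Set X, MeasurableSet[mX] s → μ s = ∫⁻ y, μy y s ∂ν)
    (hna : ∀ᵐ y ∂ν, ∀ x : X, μy y {x} = 0)
    (B : Set X) (hB : MeasurableSet[mX] B)
    (r : ℝ≥0∞) (hr : 0 < r) (hBr : ∀ᵐ y ∂ν, r ≤ μy y B) :
    ∀ s : ℝ≥0∞, s ≤ r →
      ∃ Bs : Set X, MeasurableSet[mX] Bs ∧ Bs ⊆ B ∧ ∀ᵐ y ∂ν, μy y Bs = s := by
  intro s hsr
  let φ : X → ℝ := embeddingReal X
  have hφ : MeasurableEmbedding φ := measurableEmbedding_embeddingReal X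
  have hπ : Measurable π₁ := hπ₁.measurable
  let κ : ProbabilityTheory.Kernel Y X :=
    ⟨μy, Measure.measurable_of_measurable_coe _ hμymeas⟩
  have : ProbabilityTheory.IsMarkovKernel κ := ⟨hμyprob⟩
  have hG : Measurable fun x => μy (π₁ x) {x' | x' ∈ B ∧ φ x' ≤ φ x} := by
    have ht : MeasurableSet {p : X × X | p.2 ∈ B ∧ φ p.2 ≤ φ p.1} :=
      (measurable_snd hB).inter
        (measurableSet_le (hφ.measurable.comp measurable_snd)
          (hφ.measurable.comp measurable_fst))
    exact ProbabilityTheory.Kernel.measurable_kernel_prodMk_left (κ := κ.comap π₁ hπ) ht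
  refine ⟨B ∩ {x | μy (π₁ x) {x' | x' ∈ B ∧ φ x' ≤ φ x} ≤ s},
    hB.inter (hG measurableSet_Iic), inter_subset_left, ?_⟩
  filter_upwards [hfiber, hna, hBr] with y hy hnay hry
  have := hμyprob y
  have hyae : ∀ᵐ x ∂(μy y), π₁ x = y :=
    (prob_compl_eq_zero_iff (hπ (measurableSet_singleton y))).2 hy
  set m : Measure ℝ := ((μy y).restrict B).map φ with hm
  have hmapp (E : Set ℝ) (hE : MeasurableSet E) : m E = μy y (B ∩ φ ⁻¹' E) := by
    rw [hm, Measure.map_apply hφ.measurable hE,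
      Measure.restrict_apply (hφ.measurable hE), inter_comm]
  have : NullSingletonClass m := by
    refine ⟨fun t => ?_⟩
    rw [hmapp _ (measurableSet_singleton t)]
    refine measure_mono_null inter_subset_right ?_
    exact (subsingleton_singleton.preimage hφ.injective).induction_on (p := fun E => μy y E = 0)
      measure_empty hnay
  have hAm : MeasurableSet {t | m (Iic t) ≤ s} :=
    IsLowerSet.ordConnected (fun a b hba ha =>
      (measure_mono (Iic_subset_Iic.2 hba)).trans ha) |>.measurableSet
  have hmain : m {t | m (Iic t) ≤ s} = s :=
    measure_setOf_measure_Iic_le m s (by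
      rw [hmapp _ MeasurableSet.univ, preimage_univ, inter_univ]
      exact hsr.trans hry)
  rw [hmapp _ hAm] at hmain
  refine Eq.trans (measure_congr ?_) hmain
  -- On the fiber over `y`, the measure `μy (π₁ x)` in the definition of the set is `μy y`.
  filter_upwards [hyae] with x hx
  have hGx : μy (π₁ x) {x' | x' ∈ B ∧ φ x' ≤ φ x} = m (Iic (φ x)) := by
    rw [hx, hmapp _ measurableSet_Iic]
    rfl
  refine propext (and_congr_right fun _ => ?_)
  change μy (π₁ x) {x' | x' ∈ B ∧ φ x' ≤ φ x} ≤ s ↔ m (Iic (φ x)) ≤ s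
  rw [hGx]
end

section
/- Let π₁: (X,B,μ,T) → (Y,D,ν,S) be a factor map between invertible Lebesgue systems with disintegration μ = ∫_Y μ_y dν(y), and suppose μ_y is non-atomic for ν-a.e. y ∈ Y. If U₁, U₂ ∈ B satisfy (μ×_Yμ)(U₁×U₂) > 0, then there exist a measurable set A ⊆ Y with ν(A) > 0, an integer r > 2, and a measurable partition α = {B₁,B₂,…,B_r} of X such that π₁⁻¹(A) ∩ B_i ⊆ U_i for i = 1,2, and μ_y(B_j) = 1/r for all j = 1,…,r and ν-a.e. y ∈ Y. -/
open MeasureTheory Filter Set Topology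
open scoped ENNReal

/-!
The partition is built by peeling off pieces of prescribed fibre measure. Embed `X` measurably in
`ℝ` by `φ`. For a measurable `W ⊆ X`, the function `g x = μ_{π₁ x}(W ∩ {φ ≤ φ x})` is measurable,
and since almost every `μ_y` is non-atomic, its restriction to the fibre over `y` pushes `μ_y|_W`
to the uniform measure on `[0, μ_y(W)]`. Hence `W ∩ {g ≤ c}` has fibre measure `c` as soon as
`c ≤ μ_y(W)` (`exists_subset_fiber_measure_eq`); iterating, any `W` of fibre measure `k / r` splits
into `k` pieces of fibre measure `1 / r` (`exists_fiber_partition`).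

Positivity of the relative product measure gives an `r` for which
`A = {y | μ_y(U₁) ≥ 2/r, μ_y(U₂) ≥ 2/r}` has positive measure. The enlarged sets
`V_i = U_i ∪ π₁⁻¹(Aᶜ)` have fibre measure at least `2/r` almost everywhere and agree with `U_i` over
`A`. Peeling `B₁` from `V₁`, then `B₂` from `V₂ \ B₁`, and splitting the complement into `r - 2`
pieces gives the partition.
-/

/-- The distribution function of a finite non-atomic measure on `ℝ` is uniformly distributed:
its sublevel set at height `c` has measure `c`. -/
lemma measure_cdf_le_eq (m : Measure ℝ) [IsFiniteMeasure m] (hm : ∀ x, m {x} = 0)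
    (c : ℝ≥0∞) (hc0 : 0 < c) (hc : c ≤ m univ) : m {x | m (Iic x) ≤ c} = c := by
  have hmono : Monotone fun x => m (Iic x) := fun a b h => measure_mono (Iic_subset_Iic.2 h)
  rcases hc.eq_or_lt with rfl | hlt
  · congr 1
    ext x
    simpa using measure_mono (subset_univ _)
  have hcont : Continuous fun x => m (Iic x) := by
    refine continuous_iff_continuousAt.2 fun x => ?_
    refine tendsto_measure_of_ae_tendsto_indicator_of_isFiniteMeasure (𝓝 x) measurableSet_Iic
      (fun _ => measurableSet_Iic) ?_
    filter_upwards [measure_eq_zero_iff_ae_notMem.1 (hm x)] with z hz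
    rcases lt_or_gt_of_ne hz with h | h
    · filter_upwards [lt_mem_nhds h] with i hi
      exact iff_of_true hi.le h.le
    · filter_upwards [gt_mem_nhds h] with i hi
      exact iff_of_false (not_le.2 hi) (not_le.2 h)
  have htop : Tendsto (fun x => m (Iic x)) atTop (𝓝 (m univ)) := tendsto_measure_Iic_atTop m
  have hbot : Tendsto (fun x => m (Iic x)) atBot (𝓝 0) := by
    rw [← measure_empty (μ := m)]
    refine tendsto_measure_of_ae_tendsto_indicator_of_isFiniteMeasure atBot MeasurableSet.empty
      (fun _ => measurableSet_Iic) (ae_of_all _ fun z => ?_)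
    filter_upwards [eventually_lt_atBot z] with i hi
    exact iff_of_false (not_le.2 hi) (notMem_empty z)
  obtain ⟨b, hb⟩ := (htop.eventually (lt_mem_nhds hlt)).exists
  obtain ⟨a, ha⟩ := (hbot.eventually (gt_mem_nhds hc0)).exists
  obtain ⟨t, ht⟩ := mem_range_of_exists_le_of_exists_ge hcont ⟨a, ha.le⟩ ⟨b, hb.le⟩
  set E := {x | m (Iic x) ≤ c} with hE
  have hclosed : IsClosed E := isClosed_le hcont continuous_const
  have hbdd : BddAbove E := ⟨b, fun x hx => by
    by_contra h
    exact absurd (hb.trans_le ((hmono (not_le.1 h).le).trans hx)) (lt_irrefl _)⟩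
  have htE : t ∈ E := ht.le
  have hs := hclosed.csSup_mem ⟨t, htE⟩ hbdd
  have hEeq : E = Iic (sSup E) := by
    ext x
    exact ⟨fun hx => le_csSup hbdd hx, fun hx => (hmono hx).trans hs⟩
  rw [hEeq]
  exact le_antisymm hs (ht.symm.le.trans (hmono (le_csSup hbdd htE)))

section Fibers

variable {X Y : Type*} [MeasurableSpace X] [StandardBorelSpace X] [MeasurableSpace Y]
  {ν : Measure Y} {π : X → Y} {κ : ProbabilityTheory.Kernel Y X}
  [ProbabilityTheory.IsMarkovKernel κ]

/-- Peeling: a set of fibre measure at least `c` contains a measurable set of fibre measure `c`.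
The set is cut out by the fibrewise distribution function along an embedding of `X` in `ℝ`. -/
lemma exists_subset_fiber_measure_eq (hπ : Measurable π)
    (hfib : ∀ᵐ y ∂ν, ∀ᵐ x ∂(κ y), π x = y) (hna : ∀ᵐ y ∂ν, ∀ x, κ y {x} = 0)
    {W : Set X} (hW : MeasurableSet W) {c : ℝ≥0∞} (hc0 : 0 < c)
    (hc : ∀ᵐ y ∂ν, c ≤ κ y W) :
    ∃ B ⊆ W, MeasurableSet B ∧ ∀ᵐ y ∂ν, κ y B = c := by
  obtain ⟨φ, hφ⟩ := exists_measurableEmbedding_real X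
  set g : X → ℝ≥0∞ := fun x => κ (π x) (W ∩ {z | φ z ≤ φ x}) with hg
  have hgm : Measurable g := by
    have ht : MeasurableSet {p : X × X | p.2 ∈ W ∧ φ p.2 ≤ φ p.1} :=
      (measurable_snd hW).inter
        (measurableSet_le (hφ.measurable.comp measurable_snd) (hφ.measurable.comp measurable_fst))
    exact ProbabilityTheory.Kernel.measurable_kernel_prodMk_left (κ := κ.comap π hπ) ht
  refine ⟨W ∩ {x | g x ≤ c}, inter_subset_left, hW.inter (measurableSet_le hgm measurable_const), ?_⟩
  filter_upwards [hfib, hna, hc] with y hf ha hcy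
  set m : Measure ℝ := ((κ y).restrict W).map φ with hm
  have hmIic : ∀ t, m (Iic t) = κ y (W ∩ {z | φ z ≤ t}) := fun t => by
    rw [hm, Measure.map_apply hφ.measurable measurableSet_Iic,
      Measure.restrict_apply (hφ.measurable measurableSet_Iic), inter_comm]
    rfl
  have hsing : ∀ t, m {t} = 0 := fun t => by
    rw [hm, Measure.map_apply hφ.measurable (measurableSet_singleton t)]
    refine Measure.restrict_le_self.absolutelyContinuous ?_
    rcases (subsingleton_singleton.preimage hφ.injective).eq_empty_or_singleton with h | ⟨x, h⟩
    · rw [h, measure_empty]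
    · rw [h, ha x]
  have huniv : m univ = κ y W := by
    rw [hm, Measure.map_apply hφ.measurable MeasurableSet.univ]
    simp
  have key := measure_cdf_le_eq m hsing c hc0 (huniv ▸ hcy)
  have hmeas : MeasurableSet {t | m (Iic t) ≤ c} := measurableSet_le
    (Monotone.measurable fun a b h => measure_mono (Iic_subset_Iic.2 h)) measurable_const
  have hpull : m {t | m (Iic t) ≤ c} = κ y (φ ⁻¹' {t | m (Iic t) ≤ c} ∩ W) := by
    conv_lhs => rw [hm]
    rw [Measure.map_apply hφ.measurable hmeas, Measure.restrict_apply (hφ.measurable hmeas)]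
  refine Eq.trans (measure_congr ?_) (hpull.symm.trans key)
  filter_upwards [hf] with x hx
  refine propext ?_
  change (x ∈ W ∧ κ (π x) (W ∩ {z | φ z ≤ φ x}) ≤ c) ↔ (m (Iic (φ x)) ≤ c ∧ x ∈ W)
  rw [hmIic, hx, and_comm]

/-- A set of fibre measure `(n + 1) c` splits into `n + 1` measurable pieces of fibre measure `c`.
The number of pieces is positive so that the last one can absorb everything that is left, null sets
included. -/
lemma exists_fiber_partition (hπ : Measurable π)
    (hfib : ∀ᵐ y ∂ν, ∀ᵐ x ∂(κ y), π x = y) (hna : ∀ᵐ y ∂ν, ∀ x, κ y {x} = 0)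
    {c : ℝ≥0∞} (hc0 : 0 < c) (hctop : c ≠ ∞) (n : ℕ) (W : Set X) (hW : MeasurableSet W)
    (hWc : ∀ᵐ y ∂ν, κ y W = (n + 1 : ℕ) * c) :
    ∃ C : Fin (n + 1) → Set X, (∀ j, MeasurableSet (C j)) ∧
      (∀ i j, i ≠ j → Disjoint (C i) (C j)) ∧ (⋃ j, C j) = W ∧
      ∀ᵐ y ∂ν, ∀ j, κ y (C j) = c := by
  induction n generalizing W with
  | zero =>
    refine ⟨fun _ => W, fun _ => hW, fun i j h => (h (Subsingleton.elim (α := Fin 1) i j)).elim,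
      iUnion_const W, ?_⟩
    filter_upwards [hWc] with y hy j
    simpa using hy
  | succ n ih =>
    obtain ⟨B, hBW, hB, hBc⟩ := exists_subset_fiber_measure_eq hπ hfib hna hW hc0
      (hWc.mono fun y hy => by
        rw [hy]
        exact le_mul_of_one_le_left zero_le (by exact_mod_cast Nat.le_add_left 1 (n + 1)))
    obtain ⟨C, hC, hdisj, hun, hCc⟩ := ih (W \ B) (hW.diff hB) (by
      filter_upwards [hWc, hBc] with y h1 h2
      rw [measure_sdiff hBW hB.nullMeasurableSet (measure_ne_top _ _), h1, h2]
      refine ENNReal.sub_eq_of_eq_add hctop ?_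
      push_cast
      ring)
    have hBC : ∀ j, Disjoint B (C j) := fun j =>
      disjoint_sdiff_right.mono_right (hun ▸ subset_iUnion C j)
    refine ⟨Fin.cons B C, ?_, ?_, ?_, ?_⟩
    · exact Fin.cases hB hC
    · refine Fin.cases (Fin.cases (fun h => (h rfl).elim) fun j _ => hBC j)
        fun i => Fin.cases (fun _ => (hBC i).symm) fun j h => hdisj i j fun e => h (e ▸ rfl)
    · ext x
      rw [mem_iUnion, Fin.exists_fin_succ]
      simp only [Fin.cons_zero, Fin.cons_succ]
      rw [← mem_iUnion, hun]
      simpa using ⟨fun h => h.elim (fun h => hBW h) fun h => h.1,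
        fun h => (em (x ∈ B)).imp id fun hn => ⟨h, hn⟩⟩
    · filter_upwards [hBc, hCc] with y h1 h2
      exact Fin.cases h1 h2

end Fibers

/-- **Lemma (construction of an equal-fiber-measure partition).**
Let `π₁ : (X,B,μ,T) → (Y,D,ν,S)` be a factor map between invertible Lebesgue systems with
disintegration `μ = ∫_Y μ_y dν(y)`, and suppose `μ_y` is non-atomic for `ν`-a.e. `y`.
If `U₁, U₂ ∈ B` satisfy `(μ×_Yμ)(U₁×U₂) > 0`, then there exist a measurable `A ⊆ Y` with
`ν(A) > 0`, an integer `r > 2`, and a measurable partition `{B₁,…,B_r}` of `X` such that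
`π₁⁻¹(A) ∩ B_i ⊆ U_i` for `i = 1, 2` and `μ_y(B_j) = 1/r` for all `j` and `ν`-a.e. `y`. -/
theorem exists_equal_fiber_measure_partition
    {X Y : Type*}
    [mX : MeasurableSpace X] [StandardBorelSpace X]
    [mY : MeasurableSpace Y] [StandardBorelSpace Y]
    (μ : Measure X) (ν : Measure Y)
    [IsProbabilityMeasure μ] [IsProbabilityMeasure ν]
    (T : X → X) (S : Y → Y)
    (hTbij : Function.Bijective T) (hSbij : Function.Bijective S)
    (hT : MeasurePreserving T μ μ) (hS : MeasurePreserving S ν ν)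
    (π₁ : X → Y) (hπ₁ : MeasurePreserving π₁ μ ν) (hπ₁T : π₁ ∘ T = S ∘ π₁)
    (μy : Y → Measure X) (hμyprob : ∀ y, IsProbabilityMeasure (μy y))
    (hfiber : ∀ᵐ y ∂ν, μy y (π₁ ⁻¹' {y}) = 1)
    (hμymeas : ∀ s : Set X, MeasurableSet[mX] s → Measurable fun y => μy y s)
    (hdisint : ∀ s : Set X, MeasurableSet[mX] s → μ s = ∫⁻ y, μy y s ∂ν)
    (hna : ∀ᵐ y ∂ν, ∀ x : X, μy y {x} = 0)
    (U₁ U₂ : Set X) (hU₁ : MeasurableSet[mX] U₁) (hU₂ : MeasurableSet[mX] U₂)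
    (hpos : 0 < (ν.bind fun y => (μy y).prod (μy y)) (U₁ ×ˢ U₂)) :
    ∃ A : Set Y, MeasurableSet[mY] A ∧ 0 < ν A ∧
    ∃ r : ℕ, ∃ _hr : 2 < r,
    ∃ B : Fin r → Set X,
      (∀ j, MeasurableSet[mX] (B j)) ∧
      (∀ i j, i ≠ j → Disjoint (B i) (B j)) ∧
      (⋃ j, B j) = Set.univ ∧
      π₁ ⁻¹' A ∩ B ⟨0, by omega⟩ ⊆ U₁ ∧
      π₁ ⁻¹' A ∩ B ⟨1, by omega⟩ ⊆ U₂ ∧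
      ∀ᵐ y ∂ν, ∀ j, μy y (B j) = 1 / (r : ℝ≥0∞) := by
  let κ : ProbabilityTheory.Kernel Y X := ⟨μy, Measure.measurable_of_measurable_coe _ hμymeas⟩
  have : ProbabilityTheory.IsMarkovKernel κ := ⟨hμyprob⟩
  have hπ := hπ₁.measurable
  have hfib : ∀ᵐ y ∂ν, ∀ᵐ x ∂(κ y), π₁ x = y := by
    filter_upwards [hfiber] with y hy
    exact (mem_ae_iff_prob_eq_one (μ := κ y) (hπ (measurableSet_singleton y))).2 hy
  have hbind : (ν.bind fun y => (μy y).prod (μy y)) (U₁ ×ˢ U₂)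
      = ∫⁻ y, μy y U₁ * μy y U₂ ∂ν := by
    have hmeas : Measurable fun y => (μy y).prod (μy y) := by
      have : (fun y => (μy y).prod (μy y)) = fun y => (κ.prod κ) y := by
        ext1 y
        rw [ProbabilityTheory.Kernel.prod_apply]
        rfl
      rw [this]
      exact (κ.prod κ).measurable
    rw [Measure.bind_apply (hU₁.prod hU₂) hmeas.aemeasurable]
    exact lintegral_congr fun y => Measure.prod_prod _ _
  let A : ℕ → Set Y := fun n =>
    {y | 2 * (((n + 3 : ℕ) : ℝ≥0∞))⁻¹ ≤ μy y U₁} ∩ {y | 2 * (((n + 3 : ℕ) : ℝ≥0∞))⁻¹ ≤ μy y U₂}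
  have hAm : ∀ n, MeasurableSet (A n) := fun n =>
    (measurableSet_le measurable_const (hμymeas _ hU₁)).inter
      (measurableSet_le measurable_const (hμymeas _ hU₂))
  obtain ⟨n, hn⟩ : ∃ n, 0 < ν (A n) := by
    by_contra! h
    have hnull : ∀ᵐ y ∂ν, ∀ n, y ∉ A n :=
      ae_all_iff.2 fun n => measure_eq_zero_iff_ae_notMem.1 (le_zero_iff.1 (h n))
    refine hpos.ne' (hbind.trans ((lintegral_congr_ae ?_).trans lintegral_zero))
    filter_upwards [hnull] with y hy
    by_contra hne
    have h1 : μy y U₁ ≠ 0 := left_ne_zero_of_mul hne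
    have h2 : μy y U₂ ≠ 0 := right_ne_zero_of_mul hne
    have ht : Tendsto (fun n : ℕ => 2 * (((n + 3 : ℕ) : ℝ≥0∞))⁻¹) atTop (𝓝 0) := by
      simpa using ENNReal.Tendsto.const_mul (a := 2)
        (ENNReal.tendsto_inv_nat_nhds_zero.comp (tendsto_add_atTop_nat 3)) (Or.inr (by simp))
    obtain ⟨n, hn1, hn2⟩ := ((ht.eventually (gt_mem_nhds (pos_iff_ne_zero.2 h1))).and
      (ht.eventually (gt_mem_nhds (pos_iff_ne_zero.2 h2)))).exists
    exact hy n ⟨hn1.le, hn2.le⟩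
  set c : ℝ≥0∞ := (((n + 3 : ℕ) : ℝ≥0∞))⁻¹ with hc
  have hc0 : 0 < c := ENNReal.inv_pos.2 (ENNReal.natCast_ne_top _)
  have hctop : c ≠ ∞ := ENNReal.inv_ne_top.2 (by exact_mod_cast Nat.succ_ne_zero (n + 2))
  have hrc : ((n + 3 : ℕ) : ℝ≥0∞) * c = 1 :=
    ENNReal.mul_inv_cancel (by exact_mod_cast Nat.succ_ne_zero (n + 2)) (ENNReal.natCast_ne_top _)
  have hsum : (1 : ℝ≥0∞) = (n + 1 : ℕ) * c + c + c := by
    rw [← hrc]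
    push_cast
    ring
  -- Over `Aᶜ` the enlarged sets contain the whole fibre; over `A` they coincide with `U`.
  have hV : ∀ U : Set X, A n ⊆ {y | 2 * c ≤ μy y U} →
      ∀ᵐ y ∂ν, 2 * c ≤ κ y (U ∪ π₁ ⁻¹' (A n)ᶜ) := by
    intro U hU
    filter_upwards [hfib] with y hy
    by_cases hyA : y ∈ A n
    · exact le_trans (hU hyA) (measure_mono subset_union_left)
    · have : κ y (U ∪ π₁ ⁻¹' (A n)ᶜ) = 1 := by
        rw [← measure_univ (μ := κ y)]
        refine measure_congr (eventuallyEq_univ.2 ?_)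
        filter_upwards [hy] with x hx
        right
        simpa [hx] using hyA
      rw [this, hsum, two_mul, add_assoc]
      exact le_add_self
  have hV₁m : MeasurableSet (U₁ ∪ π₁ ⁻¹' (A n)ᶜ) := hU₁.union (hπ (hAm n).compl)
  have hV₂m : MeasurableSet (U₂ ∪ π₁ ⁻¹' (A n)ᶜ) := hU₂.union (hπ (hAm n).compl)
  have hle : c ≤ 2 * c := by rw [two_mul]; exact le_add_self
  obtain ⟨B₁, hB₁V, hB₁, hB₁c⟩ := exists_subset_fiber_measure_eq hπ hfib hna hV₁m hc0
    ((hV U₁ inter_subset_left).mono fun y hy => hle.trans hy)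
  obtain ⟨B₂, hB₂V, hB₂, hB₂c⟩ := exists_subset_fiber_measure_eq hπ hfib hna (hV₂m.diff hB₁) hc0
    (by
      filter_upwards [hV U₂ inter_subset_right, hB₁c] with y h1 h2
      refine le_trans ?_ (le_measure_sdiff (μ := κ y))
      rw [h2]
      refine ENNReal.le_sub_of_add_le_right hctop ?_
      rwa [← two_mul])
  have h12 : Disjoint B₁ B₂ := disjoint_sdiff_right.mono_right hB₂V
  obtain ⟨C, hC, hdisj, hun, hCc⟩ := exists_fiber_partition hπ hfib hna hc0 hctop n
    (B₁ ∪ B₂)ᶜ (hB₁.union hB₂).compl (by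
      filter_upwards [hB₁c, hB₂c] with y h1 h2
      rw [prob_compl_eq_one_sub (hB₁.union hB₂), measure_union h12 hB₂, h1, h2]
      refine ENNReal.sub_eq_of_eq_add (ENNReal.add_ne_top.2 ⟨hctop, hctop⟩) ?_
      rw [← add_assoc]
      exact hsum)
  have hBC : ∀ j, Disjoint (B₁ ∪ B₂) (C j) := fun j =>
    disjoint_compl_right.mono_right (hun ▸ subset_iUnion C j)
  have hBC₁ : ∀ j, Disjoint B₁ (C j) := fun j => (hBC j).mono_left subset_union_left
  have hBC₂ : ∀ j, Disjoint B₂ (C j) := fun j => (hBC j).mono_left subset_union_right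
  refine ⟨A n, hAm n, hn, n + 3, by omega, Fin.cons B₁ (Fin.cons B₂ C), ?_, ?_, ?_, ?_, ?_, ?_⟩
  · exact Fin.cases hB₁ (Fin.cases hB₂ hC)
  · refine Fin.cases (Fin.cases (fun h => (h rfl).elim) (Fin.cases (fun _ => h12) fun j _ => hBC₁ j))
      (Fin.cases (Fin.cases (fun _ => h12.symm)
          (Fin.cases (fun h => (h rfl).elim) fun j _ => hBC₂ j))
        fun i => Fin.cases (fun _ => (hBC₁ i).symm)
          (Fin.cases (fun _ => (hBC₂ i).symm) fun j h => hdisj i j fun e => h (e ▸ rfl)))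
  · ext x
    rw [mem_iUnion, Fin.exists_fin_succ, Fin.exists_fin_succ]
    simp only [Fin.cons_zero, Fin.cons_succ]
    rw [← mem_iUnion, hun]
    simp only [mem_compl_iff, mem_union, mem_univ, iff_true]
    tauto
  · exact fun x hx => (hB₁V hx.2).resolve_right fun h => h hx.1
  · exact fun x hx => (hB₂V hx.2).1.resolve_right fun h => h hx.1
  · filter_upwards [hB₁c, hB₂c, hCc] with y h1 h2 h3
    rw [one_div]
    exact Fin.cases h1 (Fin.cases h2 h3)
end

section
/- Given an integer r ≥ 2 and a real λ > 1, there is a constant e > 0 such that for all n ∈ ℕ, if S ⊆ {1,2,…,r}^{{1,2,…,n}} satisfies |S| ≥ ((r−1)λ)^n, then there exists I ⊆ {1,2,…,n} with |I| ≥ en and S|_I = {1,2,…,r}^I, i.e., for every u ∈ {1,2,…,r}^I there is s ∈ S with s(j) = u(j) for all j ∈ I. -/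
/-!
Call `I` shattered by `S` if every pattern on `I` is realised by an element of `S`. The main point
is Pajor's form of the Sauer–Shelah lemma for `r` letters: `|S| ≤ (r - 1)^n · #{I shattered by S}`
(`card_le_shattered`). It goes by induction on `n`: let `U` be the set of tails of elements of `S`
and `M ⊆ U` the set of tails that extend to `S` by all `r` letters. Then
`|S| ≤ (r - 1)|U| + |M|`, a set shattered by `U` is shattered by `S` (after a shift), and a set
shattered by `M` is shattered by `S` even after adding the first coordinate.

Hence `|S| ≥ ((r - 1)λ)^n` forces at least `λ^n` shattered sets. For `0 < x < 1`, if all of them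
had size `< e n`, then `λ^n · x^(e n) < ∑_I x^|I| = (1 + x)^n`. Taking `x = (λ - 1)/λ`, so that
`1 + x < λ`, and `e > 0` with `x^e = (1 + x)/λ` gives a contradiction.
-/

/-- `I` is shattered by `S`: every `r`-letter pattern on `I` is the restriction of some
element of `S`. -/
def KMAShatters {n r : ℕ} (S : Finset (Fin n → Fin r)) (I : Finset (Fin n)) : Prop :=
  ∀ u : Fin n → Fin r, ∃ s ∈ S, ∀ j ∈ I, s j = u j

open Classical in
/-- Tails which extend to `S` by at least one first letter. -/
noncomputable def kmaUnion {n r : ℕ} (S : Finset (Fin (n + 1) → Fin r)) :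
    Finset (Fin n → Fin r) :=
  Finset.univ.filter fun f => ∃ a, (Fin.cons a f : Fin (n + 1) → Fin r) ∈ S

open Classical in
/-- Tails which extend to `S` by every first letter. -/
noncomputable def kmaInter {n r : ℕ} (S : Finset (Fin (n + 1) → Fin r)) :
    Finset (Fin n → Fin r) :=
  Finset.univ.filter fun f => ∀ a, (Fin.cons a f : Fin (n + 1) → Fin r) ∈ S

open Classical in
/-- The family of sets shattered by `S`. -/
noncomputable def kmaFamily {n r : ℕ} (S : Finset (Fin n → Fin r)) : Finset (Finset (Fin n)) :=
  Finset.univ.filter fun I => KMAShatters S I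

lemma KMAShatters.of_union {n r : ℕ} {S : Finset (Fin (n + 1) → Fin r)} {I : Finset (Fin n)}
    (h : KMAShatters (kmaUnion S) I) : KMAShatters S (I.map (Fin.succEmb n)) := by
  intro u
  obtain ⟨f, hf, hfu⟩ := h (fun j => u j.succ)
  obtain ⟨a, ha⟩ := (Finset.mem_filter.1 hf).2
  refine ⟨_, ha, ?_⟩
  intro j hj
  obtain ⟨i, hi, rfl⟩ := Finset.mem_map.1 hj
  simpa using hfu i hi

lemma KMAShatters.of_inter {n r : ℕ} {S : Finset (Fin (n + 1) → Fin r)} {I : Finset (Fin n)}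
    (h : KMAShatters (kmaInter S) I) : KMAShatters S (insert 0 (I.map (Fin.succEmb n))) := by
  intro u
  obtain ⟨f, hf, hfu⟩ := h (fun j => u j.succ)
  refine ⟨_, (Finset.mem_filter.1 hf).2 (u 0), ?_⟩
  intro j hj
  rcases Finset.mem_insert.1 hj with rfl | hj
  · simp
  · obtain ⟨i, hi, rfl⟩ := Finset.mem_map.1 hj
    simpa using hfu i hi

lemma zero_notMem_map_succEmb {n : ℕ} (I : Finset (Fin n)) :
    (0 : Fin (n + 1)) ∉ I.map (Fin.succEmb n) := by
  simp [Fin.succ_ne_zero]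

lemma card_kmaFamily_add_le {n r : ℕ} (S : Finset (Fin (n + 1) → Fin r)) :
    (kmaFamily (kmaUnion S)).card + (kmaFamily (kmaInter S)).card ≤ (kmaFamily S).card := by
  classical
  have h1 : Function.Injective fun I : Finset (Fin n) => I.map (Fin.succEmb n) :=
    Finset.map_injective _
  have h2 : Function.Injective
      fun I : Finset (Fin n) => insert (0 : Fin (n + 1)) (I.map (Fin.succEmb n)) := by
    intro I J hIJ
    apply h1
    have := congrArg (fun K => Finset.erase K (0 : Fin (n + 1))) hIJ
    simpa only [Finset.erase_insert (zero_notMem_map_succEmb _)] using this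
  rw [← Finset.card_image_of_injective (kmaFamily (kmaUnion S)) h1,
    ← Finset.card_image_of_injective (kmaFamily (kmaInter S)) h2, ← Finset.card_union_of_disjoint]
  · apply Finset.card_le_card
    intro K hK
    rcases Finset.mem_union.1 hK with hK | hK
    · obtain ⟨I, hI, rfl⟩ := Finset.mem_image.1 hK
      exact Finset.mem_filter.2 ⟨Finset.mem_univ _, (Finset.mem_filter.1 hI).2.of_union⟩
    · obtain ⟨I, hI, rfl⟩ := Finset.mem_image.1 hK
      exact Finset.mem_filter.2 ⟨Finset.mem_univ _, (Finset.mem_filter.1 hI).2.of_inter⟩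
  · rw [Finset.disjoint_left]
    intro K hK hK'
    obtain ⟨I, -, rfl⟩ := Finset.mem_image.1 hK
    obtain ⟨J, -, hJ⟩ := Finset.mem_image.1 hK'
    exact zero_notMem_map_succEmb I (hJ ▸ Finset.mem_insert_self _ _)

/-- Each tail in `kmaUnion S` has at most `r - 1` extensions in `S`, except that those in
`kmaInter S` have one more. -/
lemma card_le_union_add_inter {n r : ℕ} (S : Finset (Fin (n + 1) → Fin r)) :
    S.card ≤ (r - 1) * (kmaUnion S).card + (kmaInter S).card := by
  classical
  have hmaps : ∀ s ∈ S, Fin.tail s ∈ kmaUnion S := fun s hs =>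
    Finset.mem_filter.2 ⟨Finset.mem_univ _, s 0, by rwa [Fin.cons_self_tail]⟩
  have hfib : ∀ f ∈ kmaUnion S, (S.filter fun s => Fin.tail s = f).card
      ≤ (r - 1) + if f ∈ kmaInter S then 1 else 0 := by
    intro f _
    have hinj : Set.InjOn (fun s : Fin (n + 1) → Fin r => s 0)
        (S.filter fun s => Fin.tail s = f) := by
      intro s hs t ht hst
      have hs' := (Finset.mem_filter.1 hs).2
      have ht' := (Finset.mem_filter.1 ht).2
      rw [← Fin.cons_self_tail s, ← Fin.cons_self_tail t, hs', ht']
      exact congrArg (fun a => (Fin.cons a f : Fin (n + 1) → Fin r)) hst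
    rw [← Finset.card_image_of_injOn hinj]
    split_ifs with hf
    · refine (Finset.card_le_univ _).trans ?_
      rw [Fintype.card_fin]
      omega
    · obtain ⟨a, ha⟩ : ∃ a, (Fin.cons a f : Fin (n + 1) → Fin r) ∉ S := by
        by_contra! hc
        exact hf (Finset.mem_filter.2 ⟨Finset.mem_univ _, hc⟩)
      have hle : ((S.filter fun s => Fin.tail s = f).image fun s => s 0).card
          ≤ (Finset.univ.erase a).card := by
        apply Finset.card_le_card
        intro b hb
        obtain ⟨s, hs, rfl⟩ := Finset.mem_image.1 hb
        obtain ⟨hsS, rfl⟩ := Finset.mem_filter.1 hs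
        refine Finset.mem_erase.2 ⟨?_, Finset.mem_univ _⟩
        rintro rfl
        exact ha (by rwa [Fin.cons_self_tail])
      simpa [Finset.card_erase_of_mem] using hle
  rw [Finset.card_eq_sum_card_fiberwise hmaps]
  refine (Finset.sum_le_sum hfib).trans ?_
  rw [Finset.sum_add_distrib, Finset.sum_const, smul_eq_mul, mul_comm, ← Finset.card_filter]
  gcongr
  intro f hf
  exact (Finset.mem_filter.1 hf).2

/-- Pajor's form of the Sauer–Shelah lemma over an alphabet of `r` letters. -/
lemma card_le_shattered {r : ℕ} (hr : 2 ≤ r) {n : ℕ} (S : Finset (Fin n → Fin r)) :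
    S.card ≤ (r - 1) ^ n * (kmaFamily S).card := by
  classical
  induction n with
  | zero =>
    rcases S.eq_empty_or_nonempty with rfl | ⟨s, hs⟩
    · simp
    · have h1 : S.card ≤ 1 := Finset.card_le_one_of_subsingleton S
      have h2 : 0 < (kmaFamily S).card := Finset.card_pos.2
        ⟨∅, Finset.mem_filter.2 ⟨Finset.mem_univ _, fun u => ⟨s, hs, by simp⟩⟩⟩
      simp only [pow_zero, one_mul]
      omega
  | succ n ih =>
    calc S.card ≤ (r - 1) * (kmaUnion S).card + (kmaInter S).card := card_le_union_add_inter S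
      _ ≤ (r - 1) * (kmaUnion S).card + (r - 1) * (kmaInter S).card :=
        Nat.add_le_add_left (Nat.le_mul_of_pos_left _ (by omega)) _
      _ ≤ (r - 1) * ((r - 1) ^ n * (kmaFamily (kmaUnion S)).card)
          + (r - 1) * ((r - 1) ^ n * (kmaFamily (kmaInter S)).card) := by
        gcongr
        · exact ih _
        · exact ih _
      _ = (r - 1) ^ (n + 1)
          * ((kmaFamily (kmaUnion S)).card + (kmaFamily (kmaInter S)).card) := by ring
      _ ≤ (r - 1) ^ (n + 1) * (kmaFamily S).card :=
        Nat.mul_le_mul_left _ (card_kmaFamily_add_le S)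

/-- **Karpovsky–Milman–Alon generalization of the Sauer–Perles–Shelah lemma.**
Given `r ≥ 2` and `λ > 1` there is a constant `e > 0` such that for all `n`, if
`S ⊆ {1,…,r}^{{1,…,n}}` satisfies `|S| ≥ ((r−1)λ)^n`, then there is `I ⊆ {1,…,n}` with
`|I| ≥ e·n` and `S|_I = {1,…,r}^I`, i.e. every `u : I → {1,…,r}` is the restriction to `I`
of some `s ∈ S`. -/
theorem karpovsky_milman_alon
    (r : ℕ) (hr : 2 ≤ r) (lam : ℝ) (hlam : 1 < lam) :
    ∃ e : ℝ, 0 < e ∧ ∀ n : ℕ, ∀ S : Finset (Fin n → Fin r),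
      (((r : ℝ) - 1) * lam) ^ n ≤ (S.card : ℝ) →
      ∃ I : Finset (Fin n), e * n ≤ (I.card : ℝ) ∧
        ∀ u : Fin n → Fin r, ∃ s ∈ S, ∀ j ∈ I, s j = u j := by
  classical
  have hl0 : 0 < lam := by linarith
  obtain ⟨x, hx0, hx1, hxl⟩ : ∃ x : ℝ, 0 < x ∧ x < 1 ∧ 1 + x < lam := by
    refine ⟨(lam - 1) / lam, div_pos (by linarith) hl0, (div_lt_one hl0).2 (by linarith), ?_⟩
    have := div_lt_self (sub_pos.2 hlam) hlam
    linarith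
  have hy0 : 0 < (1 + x) / lam := by positivity
  have hlogx : Real.log x < 0 := Real.log_neg hx0 hx1
  have hxe : x ^ (Real.log ((1 + x) / lam) / Real.log x) = (1 + x) / lam := by
    rw [Real.rpow_def_of_pos hx0, mul_div_cancel₀ _ hlogx.ne, Real.exp_log hy0]
  refine ⟨Real.log ((1 + x) / lam) / Real.log x,
    div_pos_of_neg_of_neg (Real.log_neg hy0 ((div_lt_one hl0).2 hxl)) hlogx, ?_⟩
  generalize Real.log ((1 + x) / lam) / Real.log x = e at hxe
  intro n S hS
  by_contra! hcon
  have hsmall : ∀ I ∈ kmaFamily S, (I.card : ℝ) < e * n := by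
    intro I hI
    by_contra! hc
    obtain ⟨u, hu⟩ := hcon I hc
    obtain ⟨s, hs, hsu⟩ := (Finset.mem_filter.1 hI).2 u
    obtain ⟨j, hj, hne⟩ := hu s hs
    exact hne (hsu j hj)
  have hq : (0 : ℝ) < (r : ℝ) - 1 := by
    have : (2 : ℝ) ≤ r := by exact_mod_cast hr
    linarith
  have hmany : lam ^ n ≤ ((kmaFamily S).card : ℝ) := by
    have h := card_le_shattered hr S
    have h' : (S.card : ℝ) ≤ ((r : ℝ) - 1) ^ n * (kmaFamily S).card := by
      have h2 : (S.card : ℝ) ≤ (((r - 1) ^ n * (kmaFamily S).card : ℕ) : ℝ) := by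
        exact_mod_cast h
      simpa [Nat.cast_sub (show 1 ≤ r by omega)] using h2
    rw [mul_pow] at hS
    exact le_of_mul_le_mul_left (hS.trans h') (pow_pos hq n)
  have hne : (kmaFamily S).Nonempty := by
    rw [← Finset.card_pos]
    exact_mod_cast (pow_pos hl0 n).trans_le hmany
  have hlt : ((kmaFamily S).card : ℝ) * ((1 + x) / lam) ^ n < (1 + x) ^ n := by
    calc ((kmaFamily S).card : ℝ) * ((1 + x) / lam) ^ n
        = ∑ I ∈ kmaFamily S, ((1 + x) / lam) ^ n := by simp
      _ < ∑ I ∈ kmaFamily S, x ^ I.card := by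
        apply Finset.sum_lt_sum_of_nonempty hne
        intro I hI
        rw [← hxe, ← Real.rpow_natCast, ← Real.rpow_mul hx0.le, ← Real.rpow_natCast]
        exact Real.rpow_lt_rpow_of_exponent_gt hx0 hx1 (hsmall I hI)
      _ ≤ ∑ I : Finset (Fin n), x ^ I.card :=
        Finset.sum_le_sum_of_subset_of_nonneg (Finset.subset_univ _)
          fun _ _ _ => pow_nonneg hx0.le _
      _ = (1 + x) ^ n := by
        have := Fintype.sum_pow_mul_eq_add_pow (Fin n) x 1
        simpa [add_comm] using this
  have hge : (1 + x) ^ n ≤ ((kmaFamily S).card : ℝ) * ((1 + x) / lam) ^ n := by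
    calc (1 + x) ^ n = lam ^ n * ((1 + x) / lam) ^ n := by
          rw [← mul_pow, mul_div_cancel₀ _ hl0.ne']
      _ ≤ _ := by gcongr
  exact absurd hlt hge.not_gt
end

section
/- Let (X,B,μ,T) be a measure-theoretic dynamical system. Then for any finite measurable partitions α, β of X, inf_{n≥1} (1/n) H_μ(⋁_{i=0}^{n−1} T^{-i}α | ⋁_{i=0}^{n−1} T^{-i}β) = h_μ(T, α∨β) − h_μ(T, β), and moreover this infimum equals the corresponding limit as n → ∞. -/
/-! The finite partitions `α`, `β` are encoded as finite-valued measurable maps `a`, `b`, so that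
`⋁_{i<n} T^{-i}α` becomes the map `x ↦ (a (T^i x))_{i<n}`, here `word T a n`. Write `H` for the
entropy of such a map. Two facts carry the proof.

* The chain rule `H(f | σ(g)) = H(f, g) - H(g)` (`condH_comap_eq`). A conditional expectation given
  `σ(g)` has the form `φ ∘ g`, and integrating it over `{g = j}` determines `φ j` whenever
  `{g = j}` has positive measure.
* Submodularity `H(f, g, h) + H(h) ≤ H(f, h) + H(g, h)` (`ent_submodular`), a consequence of
  `log t ≤ t - 1`.

By the chain rule the sequence in question is `c n / n` with
`c n = H(word a n, word b n) - H(word b n)`. Submodularity, used three times, and the invariance of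
`μ` show that `c` is subadditive (`subadditive_relEnt`); by Fekete's lemma `c n / n` converges to
its infimum. Submodularity also makes both entropy sequences subadditive, so
`H(word (a, b) n) / n` and `H(word b n) / n` converge to `h(T, α ∨ β)` and `h(T, β)`; hence the
limit of `c n / n` is the difference of the two. -/

open MeasureTheory Filter Set Topology

/-! ### Entropy of finite-valued maps -/

section Ent

variable {X : Type*} [MeasurableSpace X] {ι κ τ : Type*}
  [Fintype ι] [MeasurableSpace ι] [MeasurableSingletonClass ι]
  [Fintype κ] [MeasurableSpace κ] [MeasurableSingletonClass κ]
  [Fintype τ] [MeasurableSpace τ] [MeasurableSingletonClass τ]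

/-- Entropy of a map `f` with finitely many values, that is, of the partition into its fibres. -/
noncomputable def ent {X : Type*} [MeasurableSpace X] (μ : Measure X) {ι : Type*} [Fintype ι]
    (f : X → ι) : ℝ :=
  ∑ i, Real.negMulLog (μ.real (f ⁻¹' {i}))

omit [MeasurableSpace ι] [MeasurableSingletonClass ι] [MeasurableSpace κ]
  [MeasurableSingletonClass κ] in
lemma ent_equiv (μ : Measure X) (e : ι ≃ κ) (f : X → ι) :
    ent μ (fun x => e (f x)) = ent μ f := by
  unfold ent
  refine (Fintype.sum_equiv e _ _ fun i => ?_).symm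
  congr 2
  ext x
  simp

lemma ent_comp_measurePreserving {μ : Measure X} {S : X → X}
    (hS : MeasurePreserving S μ μ) {f : X → ι} (hf : Measurable f) :
    ent μ (fun x => f (S x)) = ent μ f := by
  unfold ent
  refine Finset.sum_congr rfl fun i _ => ?_
  have h : (fun x => f (S x)) ⁻¹' {i} = S ⁻¹' (f ⁻¹' {i}) := rfl
  rw [h, hS.measureReal_preimage (hf (measurableSet_singleton i)).nullMeasurableSet]

omit [MeasurableSpace ι] [MeasurableSingletonClass ι] in
lemma ent_nonneg (μ : Measure X) [IsProbabilityMeasure μ] (f : X → ι) : 0 ≤ ent μ f :=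
  Finset.sum_nonneg fun _ _ => Real.negMulLog_nonneg measureReal_nonneg measureReal_le_one

omit [Fintype κ] in
/-- The marginal law of `g` is the sum of the joint law of `(f, g)` over the values of `f`. -/
lemma sum_law_pair (μ : Measure X) [IsProbabilityMeasure μ] {f : X → ι} {g : X → κ}
    (hf : Measurable f) (hg : Measurable g) (j : κ) :
    ∑ i, μ.real ((fun x => (f x, g x)) ⁻¹' {(i, j)}) = μ.real (g ⁻¹' {j}) := by
  classical
  rw [← measureReal_biUnion_finset]
  · congr 1
    ext x
    simp
  · intro i _ i' _ hne
    refine Set.disjoint_left.2 fun x hx hx' => hne ?_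
    simp only [mem_preimage, mem_singleton_iff, Prod.mk.injEq] at hx hx'
    exact hx.1.symm.trans hx'.1
  · exact fun i _ => (hf.prodMk hg) (measurableSet_singleton _)

lemma ent_le_ent_pair (μ : Measure X) [IsProbabilityMeasure μ] {f : X → ι} {g : X → κ}
    (hf : Measurable f) (hg : Measurable g) :
    ent μ g ≤ ent μ (fun x => (f x, g x)) := by
  unfold ent
  rw [Fintype.sum_prod_type_right]
  refine Finset.sum_le_sum fun j _ => ?_
  have hsum := sum_law_pair μ hf hg j
  set q := μ.real (g ⁻¹' {j})
  have h : Real.negMulLog q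
      = ∑ i, μ.real ((fun x => (f x, g x)) ⁻¹' {(i, j)}) * (-Real.log q) := by
    rw [← Finset.sum_mul, hsum, Real.negMulLog]; ring
  rw [h]
  refine Finset.sum_le_sum fun i _ => ?_
  have hle : μ.real ((fun x => (f x, g x)) ⁻¹' {(i, j)}) ≤ q := by
    rw [← hsum]
    exact Finset.single_le_sum
      (f := fun i => μ.real ((fun x => (f x, g x)) ⁻¹' {(i, j)}))
      (fun _ _ => measureReal_nonneg) (Finset.mem_univ i)
  have h0 : 0 ≤ μ.real ((fun x => (f x, g x)) ⁻¹' {(i, j)}) := measureReal_nonneg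
  set p := μ.real ((fun x => (f x, g x)) ⁻¹' {(i, j)})
  rcases h0.eq_or_lt with h0 | h0
  · simp [← h0]
  · have := Real.log_le_log h0 hle
    rw [Real.negMulLog]
    nlinarith

/-- The pointwise estimate behind submodularity: `log t ≤ t - 1` at `t = u v / (p w)`. -/
lemma mul_log_le_div_sub {p u v w : ℝ} (hp : 0 ≤ p) (hu : p ≤ u) (hv : p ≤ v) (hw : u ≤ w) :
    p * (Real.log u + Real.log v - Real.log p - Real.log w) ≤ u * v / w - p := by
  rcases hp.eq_or_lt with rfl | hp
  · simp only [zero_mul, sub_zero]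
    exact div_nonneg (mul_nonneg hu hv) (hu.trans hw)
  have hu' : 0 < u := hp.trans_le hu
  have hv' : 0 < v := hp.trans_le hv
  have hw' : 0 < w := hu'.trans_le hw
  have h := Real.log_le_sub_one_of_pos (x := u * v / (p * w)) (by positivity)
  rw [Real.log_div (by positivity) (by positivity), Real.log_mul hu'.ne' hv'.ne',
    Real.log_mul hp.ne' hw'.ne'] at h
  calc p * (Real.log u + Real.log v - Real.log p - Real.log w)
      ≤ p * (u * v / (p * w) - 1) := by exact mul_le_mul_of_nonneg_left (by linarith) hp.le
    _ = u * v / w - p := by field_simp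

omit [MeasurableSpace ι] [MeasurableSingletonClass ι] [MeasurableSpace κ]
  [MeasurableSingletonClass κ] [MeasurableSpace τ] [MeasurableSingletonClass τ] in
/-- Submodularity for a nonnegative array `p` whose marginals are `u`, `v` and `w`. -/
lemma sum_negMulLog_submodular (p : ι → κ → τ → ℝ) (u : ι → τ → ℝ) (v : κ → τ → ℝ) (w : τ → ℝ)
    (hp : ∀ i j k, 0 ≤ p i j k) (hu : ∀ i k, ∑ j, p i j k = u i k)
    (hv : ∀ j k, ∑ i, p i j k = v j k) (hw : ∀ k, ∑ i, u i k = w k)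
    (hw' : ∀ k, ∑ j, v j k = w k) :
    (∑ k, ∑ i, ∑ j, Real.negMulLog (p i j k)) + ∑ k, Real.negMulLog (w k) ≤
      (∑ k, ∑ i, Real.negMulLog (u i k)) + ∑ k, ∑ j, Real.negMulLog (v j k) := by
  rw [← Finset.sum_add_distrib, ← Finset.sum_add_distrib]
  refine Finset.sum_le_sum fun k _ => ?_
  have hu0 : ∀ i, 0 ≤ u i k := fun i => by
    rw [← hu]; exact Finset.sum_nonneg fun _ _ => hp _ _ _
  have hple : ∀ i j, p i j k ≤ u i k := fun i j => by
    rw [← hu]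
    exact Finset.single_le_sum (f := fun j => p i j k) (fun _ _ => hp _ _ _) (Finset.mem_univ j)
  have hplv : ∀ i j, p i j k ≤ v j k := fun i j => by
    rw [← hv]
    exact Finset.single_le_sum (f := fun i => p i j k) (fun _ _ => hp _ _ _) (Finset.mem_univ i)
  have hulw : ∀ i, u i k ≤ w k := fun i => by
    rw [← hw]
    exact Finset.single_le_sum (f := fun i => u i k) (fun i _ => hu0 i) (Finset.mem_univ i)
  have key : ∑ i, ∑ j, p i j k *
        (Real.log (u i k) + Real.log (v j k) - Real.log (p i j k) - Real.log (w k))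
      ≤ ∑ i, ∑ j, (u i k * v j k / w k - p i j k) :=
    Finset.sum_le_sum fun i _ => Finset.sum_le_sum fun j _ =>
      mul_log_le_div_sub (hp i j k) (hple i j) (hplv i j) (hulw i)
  have hR : ∑ i, ∑ j, (u i k * v j k / w k - p i j k) = 0 := by
    simp only [Finset.sum_sub_distrib, hu, hw, ← Finset.sum_div, ← Finset.mul_sum, hw']
    rw [← Finset.sum_mul, hw, mul_self_div_self, sub_self]
  have e1 : ∑ i, ∑ j, p i j k * Real.log (u i k) = -∑ i, Real.negMulLog (u i k) := by
    rw [← Finset.sum_neg_distrib]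
    refine Finset.sum_congr rfl fun i _ => ?_
    rw [← Finset.sum_mul, hu, Real.negMulLog]; ring
  have e2 : ∑ i, ∑ j, p i j k * Real.log (v j k) = -∑ j, Real.negMulLog (v j k) := by
    rw [Finset.sum_comm, ← Finset.sum_neg_distrib]
    refine Finset.sum_congr rfl fun j _ => ?_
    rw [← Finset.sum_mul, hv, Real.negMulLog]; ring
  have e3 : ∑ i, ∑ j, p i j k * Real.log (p i j k)
      = -∑ i, ∑ j, Real.negMulLog (p i j k) := by
    simp only [← Finset.sum_neg_distrib]
    refine Finset.sum_congr rfl fun i _ => Finset.sum_congr rfl fun j _ => ?_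
    rw [Real.negMulLog]; ring
  have e4 : ∑ i, ∑ j, p i j k * Real.log (w k) = -Real.negMulLog (w k) := by
    simp only [← Finset.sum_mul, hu, hw]
    rw [Real.negMulLog]; ring
  simp only [mul_sub, mul_add, Finset.sum_sub_distrib, Finset.sum_add_distrib] at key hR
  rw [hR, e1, e2, e3, e4] at key
  linarith

/-- Strong subadditivity of entropy. -/
lemma ent_submodular (μ : Measure X) [IsProbabilityMeasure μ] {f : X → ι} {g : X → κ} {h : X → τ}
    (hf : Measurable f) (hg : Measurable g) (hh : Measurable h) :
    ent μ (fun x => (f x, g x, h x)) + ent μ h ≤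
      ent μ (fun x => (f x, h x)) + ent μ (fun x => (g x, h x)) := by
  have hm := sum_negMulLog_submodular
    (fun i j k => μ.real ((fun x => (f x, g x, h x)) ⁻¹' {(i, j, k)}))
    (fun i k => μ.real ((fun x => (f x, h x)) ⁻¹' {(i, k)}))
    (fun j k => μ.real ((fun x => (g x, h x)) ⁻¹' {(j, k)}))
    (fun k => μ.real (h ⁻¹' {k}))
    (fun _ _ _ => measureReal_nonneg)
    (fun i k => by
      rw [← sum_law_pair μ hg (hf.prodMk hh) (i, k)]
      refine Finset.sum_congr rfl fun j _ => ?_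
      congr 1
      ext x
      simp only [mem_preimage, mem_singleton_iff, Prod.mk.injEq]
      tauto)
    (fun j k => sum_law_pair μ hf (hg.prodMk hh) (j, k))
    (fun k => sum_law_pair μ hf hh k) (fun k => sum_law_pair μ hg hh k)
  have e : ent μ (fun x => (f x, g x, h x)) = ∑ k, ∑ i, ∑ j,
      Real.negMulLog (μ.real ((fun x => (f x, g x, h x)) ⁻¹' {(i, j, k)})) := by
    unfold ent
    rw [Fintype.sum_prod_type, Finset.sum_comm, Fintype.sum_prod_type_right]
    exact Finset.sum_congr rfl fun k _ => Finset.sum_comm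
  rw [e]
  simpa only [ent, Fintype.sum_prod_type_right] using hm

/-- Submodularity with a one-point third variable. -/
lemma ent_pair_le (μ : Measure X) [IsProbabilityMeasure μ] {f : X → ι} {g : X → κ}
    (hf : Measurable f) (hg : Measurable g) :
    ent μ (fun x => (f x, g x)) ≤ ent μ f + ent μ g := by
  have h := ent_submodular μ hf hg (measurable_const (a := ()))
  have e0 := ent_nonneg μ (fun _ : X => ())
  have e1 := ent_equiv μ (Equiv.prodPUnit ι).symm f
  have e2 := ent_equiv μ (Equiv.prodPUnit κ).symm g
  have e3 := ent_equiv μ ((Equiv.refl ι).prodCongr (Equiv.prodPUnit κ).symm)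
    (fun x => (f x, g x))
  simp only [Equiv.prodPUnit, Equiv.coe_fn_symm_mk, Equiv.prodCongr_apply, Prod.map,
    Equiv.refl_apply] at e1 e2 e3
  linarith

end Ent

/-! ### The chain rule -/

section Chain

variable {X : Type*} [mX : MeasurableSpace X] {ι κ : Type*}
  [Fintype ι] [MeasurableSpace ι] [MeasurableSingletonClass ι]
  [Fintype κ] [mκ : MeasurableSpace κ] [MeasurableSingletonClass κ]

omit mX in
lemma generateFrom_fibres (g : X → κ) :
    MeasurableSpace.generateFrom (Set.range fun j => g ⁻¹' {j}) = mκ.comap g := by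
  apply le_antisymm
  · refine MeasurableSpace.generateFrom_le ?_
    rintro _ ⟨j, rfl⟩
    exact ⟨{j}, measurableSet_singleton j, rfl⟩
  · rintro _ ⟨S, -, rfl⟩
    have h : g ⁻¹' S = ⋃ j ∈ S, g ⁻¹' {j} := by ext x; simp
    rw [h]
    exact MeasurableSet.biUnion (Set.to_countable S)
      fun j _ => MeasurableSpace.measurableSet_generateFrom ⟨j, rfl⟩

omit [Fintype κ] in
/-- Conditional expectation of an indicator given a finite-valued map `g`. Only the product with
`μ (g = j)` is specified, since `φ j` is arbitrary on a null fibre. -/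
lemma exists_condExp_indicator (μ : Measure X) [IsProbabilityMeasure μ] {g : X → κ}
    (hg : Measurable g) {A : Set X} (hA : MeasurableSet A) :
    ∃ φ : κ → ℝ, (μ[A.indicator (fun _ => (1 : ℝ)) | mκ.comap g]) = φ ∘ g ∧
      ∀ j, μ.real (g ⁻¹' {j}) * φ j = μ.real (A ∩ g ⁻¹' {j}) := by
  have hle : mκ.comap g ≤ mX := hg.comap_le
  obtain ⟨φ, -, hφ⟩ := (stronglyMeasurable_condExp (μ := μ) (m := mκ.comap g)
    (f := A.indicator (fun _ => (1 : ℝ)))).measurable.exists_eq_measurable_comp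
  refine ⟨φ, hφ, fun j => ?_⟩
  have hint : Integrable (A.indicator (fun _ => (1 : ℝ))) μ :=
    (integrable_const (1 : ℝ)).indicator hA
  have hj : MeasurableSet (g ⁻¹' {j}) := hg (measurableSet_singleton j)
  have h := setIntegral_condExp hle hint (s := g ⁻¹' {j}) ⟨{j}, measurableSet_singleton j, rfl⟩
  have h1 : ∫ x in g ⁻¹' {j}, (φ ∘ g) x ∂μ = ∫ _ in g ⁻¹' {j}, φ j ∂μ :=
    setIntegral_congr_fun hj fun x hx => by
      simp only [mem_preimage, mem_singleton_iff] at hx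
      simp [hx]
  rw [hφ, h1, setIntegral_const, setIntegral_indicator hA, setIntegral_const] at h
  simpa [inter_comm] using h

/-- The chain rule `H(f | σ(g)) = H(f, g) - H(g)`. -/
lemma condH_comap_eq (μ : Measure X) [IsProbabilityMeasure μ] {f : X → ι} {g : X → κ}
    (hf : Measurable f) (hg : Measurable g) :
    condH μ (fun i => f ⁻¹' {i}) (mκ.comap g) = ent μ (fun x => (f x, g x)) - ent μ g := by
  choose φ hφ hφ' using fun i =>
    exists_condExp_indicator μ hg (hf (measurableSet_singleton i))
  have hlaw : ∀ i j, μ.real ((fun x => (f x, g x)) ⁻¹' {(i, j)})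
      = μ.real (g ⁻¹' {j}) * φ i j := fun i j => by
    rw [hφ']
    congr 1
    ext x
    simp
  have hint : ∀ i, ∫ x, Real.negMulLog ((φ i ∘ g) x) ∂μ
      = ∑ j, μ.real (g ⁻¹' {j}) * Real.negMulLog (φ i j) := fun i => by
    have : IsFiniteMeasure (μ.map g) := inferInstance
    have h := integral_map (μ := μ) hg.aemeasurable
      (f := fun j => Real.negMulLog (φ i j)) (measurable_of_finite _).aestronglyMeasurable
    simp only [Function.comp]
    rw [← h, integral_fintype Integrable.of_finite]
    refine Finset.sum_congr rfl fun j _ => ?_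
    rw [map_measureReal_apply hg (measurableSet_singleton j), smul_eq_mul]
  unfold condH ent
  rw [Fintype.sum_prod_type_right]
  simp only [hφ, hint, hlaw]
  rw [Finset.sum_comm, ← Finset.sum_sub_distrib]
  refine Finset.sum_congr rfl fun j _ => ?_
  have hsum := sum_law_pair μ hf hg j
  simp only [hlaw] at hsum
  set q := μ.real (g ⁻¹' {j})
  have hq : ∑ i, φ i j * Real.negMulLog q = Real.negMulLog q := by
    have h : ∀ i, φ i j * Real.negMulLog q = (q * φ i j) * -Real.log q := fun i => by
      rw [Real.negMulLog]; ring
    simp only [h]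
    rw [← Finset.sum_mul, hsum, Real.negMulLog]; ring
  simp only [Real.negMulLog_mul, Finset.sum_add_distrib]
  rw [hq]; ring

end Chain

/-! ### Names of orbits and subadditivity -/

section Dyn

variable {X : Type*} [mX : MeasurableSpace X] {ι κ : Type*}
  [Fintype ι] [MeasurableSpace ι] [MeasurableSingletonClass ι]
  [Fintype κ] [MeasurableSpace κ] [MeasurableSingletonClass κ]

/-- The name of length `n` of a point `x`: the values of `f` along `x, T x, …, T^(n-1) x`. -/
def word {X ι : Type*} (T : X → X) (f : X → ι) (n : ℕ) (x : X) : Fin n → ι :=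
  fun i => f (T^[(i : ℕ)] x)

omit [Fintype ι] [MeasurableSingletonClass ι] in
lemma measurable_word {T : X → X} (hT : Measurable T) {f : X → ι} (hf : Measurable f) (n : ℕ) :
    Measurable (word T f n) :=
  measurable_pi_lambda _ fun i => hf.comp (hT.iterate i)

lemma word_add {X ι : Type*} (T : X → X) (f : X → ι) (m n : ℕ) (x : X) :
    word T f (m + n) x = Fin.appendEquiv m n (word T f m x, word T f n (T^[m] x)) := by
  funext i
  refine Fin.addCases (fun i => ?_) (fun i => ?_) i
  · simp [word, Fin.appendEquiv]
  · simp [word, Fin.appendEquiv, add_comm m, Function.iterate_add_apply]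

lemma joinAtoms_fibres {X ι : Type*} (T : X → X) (f : X → ι) (n : ℕ) :
    joinAtoms T (fun i => f ⁻¹' {i}) n = fun s => word T f n ⁻¹' {s} := by
  funext s
  ext x
  simp [joinAtoms, word, funext_iff]

lemma subadditive_ent_word {μ : Measure X} [IsProbabilityMeasure μ] {T : X → X}
    (hT : MeasurePreserving T μ μ) {f : X → ι} (hf : Measurable f) :
    Subadditive fun n => ent μ (word T f n) := by
  intro m n
  have e : ent μ (word T f (m + n))
      = ent μ (fun x => (word T f m x, word T f n (T^[m] x))) := by
    rw [← ent_equiv μ (Fin.appendEquiv m n)]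
    simp only [← word_add]
  have hn := measurable_word hT.measurable hf n
  have h := ent_pair_le μ (measurable_word hT.measurable hf m)
    (hn.comp (hT.measurable.iterate m))
  simp only [Function.comp_def] at h
  rw [ent_comp_measurePreserving (hT.iterate m) hn] at h
  change ent μ (word T f (m + n)) ≤ ent μ (word T f m) + ent μ (word T f n)
  rw [e]
  exact h

/-- Subadditivity of `H(⋁ T^{-i}α | ⋁ T^{-i}β)`, written as a difference of entropies. With
`A₁, B₁` the names of length `m` and `A₂, B₂` the names of length `n` of `T^m x`, it follows from
`H(A₁, A₂ | B₁, B₂) ≤ H(A₁ | B₁, B₂) + H(A₂ | B₁, B₂) ≤ H(A₁ | B₁) + H(A₂ | B₂)`. -/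
lemma subadditive_relEnt {μ : Measure X} [IsProbabilityMeasure μ] {T : X → X}
    (hT : MeasurePreserving T μ μ) {f : X → ι} (hf : Measurable f) {g : X → κ}
    (hg : Measurable g) :
    Subadditive fun n => ent μ (fun x => (word T f n x, word T g n x)) - ent μ (word T g n) := by
  intro m n
  have hTm := hT.measurable.iterate m
  have hfn := measurable_word hT.measurable hf n
  have hgn := measurable_word hT.measurable hg n
  have hA₁ := measurable_word hT.measurable hf m
  have hB₁ := measurable_word hT.measurable hg m
  have hA₂ : Measurable fun x => word T f n (T^[m] x) := hfn.comp hTm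
  have hB₂ : Measurable fun x => word T g n (T^[m] x) := hgn.comp hTm
  have s1 := ent_submodular μ hA₁ hA₂ (hB₁.prodMk hB₂)
  have s2 := ent_submodular μ hA₁ hB₂ hB₁
  have s3 := ent_submodular μ hA₂ hB₁ hB₂
  have i1 := ent_comp_measurePreserving (hT.iterate m) (hfn.prodMk hgn)
  have i2 := ent_comp_measurePreserving (hT.iterate m) hgn
  have r1 := ent_equiv μ (Equiv.prodComm _ _)
    (fun x => (word T g m x, word T g n (T^[m] x)))
  have r2 := ent_equiv μ ((Equiv.refl (Fin m → ι)).prodCongr (Equiv.prodComm _ _))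
    (fun x => (word T f m x, word T g m x, word T g n (T^[m] x)))
  have r3 := ent_equiv μ (Fin.appendEquiv m n)
    (fun x => (word T g m x, word T g n (T^[m] x)))
  have r4 := ent_equiv μ (((Equiv.prodAssoc _ _ _).symm).trans
      ((Fin.appendEquiv m n).prodCongr (Fin.appendEquiv m n)))
    (fun x => (word T f m x, word T f n (T^[m] x), word T g m x, word T g n (T^[m] x)))
  simp only [Equiv.prodComm_apply, Prod.swap_prod_mk, Equiv.prodCongr_apply, Prod.map,
    Equiv.refl_apply, Equiv.trans_apply, Equiv.prodAssoc_symm_apply, ← word_add] at r1 r2 r3 r4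
  change ent μ (fun x => (word T f (m + n) x, word T g (m + n) x))
    - ent μ (fun x => word T g (m + n) x) ≤
    (ent μ (fun x => (word T f m x, word T g m x)) - ent μ (fun x => word T g m x)) +
    (ent μ (fun x => (word T f n x, word T g n x)) - ent μ (fun x => word T g n x))
  change _ + ent μ (fun x => word T g m x) ≤ _ at s2
  linarith

/-- Fekete's lemma for a nonnegative sequence, indexed from `1` by a shift. -/
lemma Subadditive.tendsto_shift {u : ℕ → ℝ} (hu : Subadditive u) (h0 : ∀ n, 0 ≤ u n) :
    Tendsto (fun n : ℕ => (1 / (n + 1 : ℝ)) * u (n + 1)) atTop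
      (𝓝 (⨅ n : ℕ, (1 / (n + 1 : ℝ)) * u (n + 1))) := by
  have hb : BddBelow (range fun n => u n / n) := by
    refine ⟨0, ?_⟩
    rintro _ ⟨n, rfl⟩
    exact div_nonneg (h0 n) n.cast_nonneg
  have ht := (tendsto_add_atTop_iff_nat 1).2 (hu.tendsto_lim hb)
  have hfun : (fun n : ℕ => (1 / (n + 1 : ℝ)) * u (n + 1))
      = fun n : ℕ => u (n + 1) / ((n + 1 : ℕ) : ℝ) := by
    funext n
    push_cast
    ring
  rw [hfun]
  convert ht using 2
  rw [Subadditive.lim, iInf]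
  congr 1
  ext y
  constructor
  · rintro ⟨n, rfl⟩
    exact ⟨n + 1, by simp, rfl⟩
  · rintro ⟨n, hn, rfl⟩
    obtain ⟨k, rfl⟩ : ∃ k, n = k + 1 := ⟨n - 1, (Nat.sub_add_cancel hn).symm⟩
    exact ⟨k, rfl⟩

lemma tendsto_hPart {μ : Measure X} [IsProbabilityMeasure μ] {T : X → X}
    (hT : MeasurePreserving T μ μ) {f : X → ι} (hf : Measurable f) :
    Tendsto (fun n : ℕ => (1 / (n + 1 : ℝ)) * ent μ (word T f (n + 1))) atTop
      (𝓝 (hPart μ T fun i => f ⁻¹' {i})) := by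
  have h := (subadditive_ent_word hT hf).tendsto_shift fun n => ent_nonneg μ _
  unfold hPart
  simp only [joinAtoms_fibres]
  exact h

/-- A finite partition consists of the fibres of a measurable map to its index set. -/
lemma FinPart.exists_fibres (α : FinPart X mX) :
    ∃ a : X → Fin α.k, Measurable a ∧ α.atom = fun i => a ⁻¹' {i} := by
  have hc : ∀ x, ∃ i, x ∈ α.atom i := fun x => by
    simpa using (α.cover ▸ mem_univ x : x ∈ ⋃ i, α.atom i)
  choose a ha using hc
  have hfib : α.atom = fun i => a ⁻¹' {i} := by
    funext i
    ext x
    simp only [mem_preimage, mem_singleton_iff]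
    refine ⟨fun hx => ?_, fun hx => hx ▸ ha x⟩
    by_contra hne
    exact Set.disjoint_left.1 (α.disj _ _ hne) (ha x) hx
  refine ⟨a, measurable_to_countable' fun i => ?_, hfib⟩
  have h := α.meas i
  rw [hfib] at h
  exact h

end Dyn

/-- **Lemma (relative entropy difference formula).**
Let `(X,B,μ,T)` be a measure-theoretic dynamical system. For any finite measurable
partitions `α, β` of `X`,
`inf_{n≥1} (1/n) H_μ(⋁_{i<n} T^{-i}α | ⋁_{i<n} T^{-i}β) = h_μ(T, α∨β) − h_μ(T, β)`,
and moreover this infimum is the limit of the same sequence as `n → ∞`. -/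
theorem inf_condH_join_eq_hPart_sub
    {X : Type*} [mX : MeasurableSpace X] [MeasurableSpace.CountablyGenerated X]
    (μ : Measure X) [IsProbabilityMeasure μ]
    (T : X → X) (hT : MeasurePreserving T μ μ)
    (α β : FinPart X mX) :
    (⨅ n : ℕ, (1 / (n + 1 : ℝ)) *
        condH μ (joinAtoms T α.atom (n + 1))
          (MeasurableSpace.generateFrom (Set.range (joinAtoms T β.atom (n + 1)))) =
      hPart μ T (fun p : Fin α.k × Fin β.k => α.atom p.1 ∩ β.atom p.2) - hPart μ T β.atom) ∧
    Tendsto (fun n : ℕ => (1 / (n + 1 : ℝ)) *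
        condH μ (joinAtoms T α.atom (n + 1))
          (MeasurableSpace.generateFrom (Set.range (joinAtoms T β.atom (n + 1))))) atTop
      (𝓝 (hPart μ T (fun p : Fin α.k × Fin β.k => α.atom p.1 ∩ β.atom p.2) -
            hPart μ T β.atom)) := by
  obtain ⟨a, ha, hα⟩ := α.exists_fibres
  obtain ⟨b, hb, hβ⟩ := β.exists_fibres
  have hjoin : (fun p : Fin α.k × Fin β.k => α.atom p.1 ∩ β.atom p.2)
      = fun p => (fun x => (a x, b x)) ⁻¹' {p} := by
    funext p
    ext x
    simp [hα, hβ, Prod.ext_iff]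
  have hcond : ∀ n, condH μ (joinAtoms T α.atom n)
      (MeasurableSpace.generateFrom (Set.range (joinAtoms T β.atom n)))
      = ent μ (fun x => (word T a n x, word T b n x)) - ent μ (word T b n) := fun n => by
    rw [hα, hβ, joinAtoms_fibres, joinAtoms_fibres, generateFrom_fibres]
    exact condH_comap_eq μ (measurable_word hT.measurable ha n)
      (measurable_word hT.measurable hb n)
  have hpair : ∀ n, ent μ (word T (fun x => (a x, b x)) n)
      = ent μ (fun x => (word T a n x, word T b n x)) := fun n =>
    (ent_equiv μ (Equiv.arrowProdEquivProdArrow (Fin n) (fun _ => Fin α.k) (fun _ => Fin β.k))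
      (word T (fun x => (a x, b x)) n)).symm
  simp only [hcond]
  have hinf := (subadditive_relEnt hT ha hb).tendsto_shift fun n =>
    sub_nonneg.2 (ent_le_ent_pair μ (measurable_word hT.measurable ha n)
      (measurable_word hT.measurable hb n))
  have hdiff := (tendsto_hPart hT (ha.prodMk hb)).sub (tendsto_hPart hT hb)
  simp only [hpair, ← mul_sub] at hdiff
  rw [← hjoin, ← hβ] at hdiff
  exact ⟨tendsto_nhds_unique hinf hdiff, hdiff⟩
end
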